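/- arXiv:2603.10550 — 2 statements merged into one kernel-verified Lean document; each statement's English description precedes it below -/
import Mathlib

section
/- Let N ≥ 2, s ∈ (0,1), and let Ω ⊂ ℝ^N be a bounded Lipschitz domain (the Lipschitz regularity is used only through the extension property: every u ∈ H^s(Ω) is the restriction to Ω of some function in H^s_{Ω,0}). Then for every u ∈ H^s(Ω) there exists a function ũ ∈ H^s_{Ω,0}, unique up to equality a.e. on ℝ^N, such that ũ = u a.e. in Ω, [ũ]_{H^s_{Ω,0}} ≤ [v]_{H^s_{Ω,0}} for every v ∈ H^s_{Ω,0} satisfying v = u a.e. in Ω, and moreover (𝒩_s ũ)(x) = 0 for a.e. x ∈ Ω^c. -/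
open MeasureTheory Filter Topology Bornology Set
open scoped ENNReal NNReal

noncomputable section

namespace FracNeumann

abbrev Euc (N : ℕ) : Type := EuclideanSpace ℝ (Fin N)

/-- The kernel weight `|x - y| ^ (N + 2s)`. -/
def kern (N : ℕ) (s : ℝ) (x y : Euc N) : ℝ := ‖x - y‖ ^ ((N : ℝ) + 2 * s)

/-- The region `ℝ^{2N} \ (Ω^c × Ω^c)`, where `Ω^c := ℝ^N \ closure Ω`. -/
def reg (N : ℕ) (Ω : Set (Euc N)) : Set (Euc N × Euc N) :=
  {q | q.1 ∈ closure Ω ∨ q.2 ∈ closure Ω}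

/-- The squared seminorm `[u]_{H^s_{Ω,0}}²`, as an extended real number. -/
def semiSq (N : ℕ) (s : ℝ) (Ω : Set (Euc N)) (u : Euc N → ℝ) : ℝ≥0∞ :=
  ∫⁻ q in reg N Ω, ENNReal.ofReal ((u q.1 - u q.2) ^ 2 / kern N s q.1 q.2)

/-- `∫_Ω u²`, as an extended real number. -/
def l2sq (N : ℕ) (Ω : Set (Euc N)) (u : Euc N → ℝ) : ℝ≥0∞ :=
  ∫⁻ x in Ω, ENNReal.ofReal ((u x) ^ 2)

/-- Membership in `H^s_{Ω,0}`. -/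
def memHs (N : ℕ) (s : ℝ) (Ω : Set (Euc N)) (u : Euc N → ℝ) : Prop :=
  Measurable u ∧ l2sq N Ω u < ⊤ ∧ semiSq N s Ω u < ⊤

/-- The squared Gagliardo seminorm `[u]_{H^s(Ω)}²`. -/
def semiSqOn (N : ℕ) (s : ℝ) (Ω : Set (Euc N)) (u : Euc N → ℝ) : ℝ≥0∞ :=
  ∫⁻ q in Ω ×ˢ Ω, ENNReal.ofReal ((u q.1 - u q.2) ^ 2 / kern N s q.1 q.2)

/-- Membership in `H^s(Ω)` (for functions defined on all of `ℝ^N`). -/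
def memHsOn (N : ℕ) (s : ℝ) (Ω : Set (Euc N)) (u : Euc N → ℝ) : Prop :=
  Measurable u ∧ l2sq N Ω u < ⊤ ∧ semiSqOn N s Ω u < ⊤

/-- The normalizing constant `c_{N,s}` of the fractional Laplacian. -/
def cNs (N : ℕ) (s : ℝ) : ℝ :=
  (4 : ℝ) ^ s * s * Real.Gamma ((N : ℝ) / 2 + s) /
    (Real.pi ^ ((N : ℝ) / 2) * Real.Gamma (1 - s))

/-- The nonlocal Neumann derivative `𝒩_s u`. -/
def Nneu (N : ℕ) (s : ℝ) (Ω : Set (Euc N)) (u : Euc N → ℝ) (x : Euc N) : ℝ :=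
  cNs N s * ∫ y in Ω, (u x - u y) / kern N s x y

/-- Membership in `H̃^s_{Ω,0}`: members of `H^s_{Ω,0}` with `𝒩_s u = 0` a.e. in `Ω^c`. -/
def memHsTilde (N : ℕ) (s : ℝ) (Ω : Set (Euc N)) (u : Euc N → ℝ) : Prop :=
  memHs N s Ω u ∧ ∀ᵐ x ∂(volume.restrict (closure Ω)ᶜ), Nneu N s Ω u x = 0

/-- The first nontrivial Neumann eigenvalue `μ₁^{(s)}(Ω)`. -/
def mu1 (N : ℕ) (s : ℝ) (Ω : Set (Euc N)) : ℝ :=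
  sInf {t : ℝ | ∃ u : Euc N → ℝ, memHs N s Ω u ∧ (∫ x in Ω, (u x) ^ 2) = 1 ∧
    (∫ x in Ω, u x) = 0 ∧ t = cNs N s / 2 * (semiSq N s Ω u).toReal}

/-- The bilinear form (without the constant). -/
def bform (N : ℕ) (s : ℝ) (Ω : Set (Euc N)) (u v : Euc N → ℝ) : ℝ :=
  ∫ q in reg N Ω, (u q.1 - u q.2) * (v q.1 - v q.2) / kern N s q.1 q.2

/-- First nontrivial eigenfunction: weak solution associated to `μ₁^{(s)}(Ω)`. -/
def IsFirstEigen (N : ℕ) (s : ℝ) (Ω : Set (Euc N)) (u : Euc N → ℝ) : Prop :=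
  memHs N s Ω u ∧ ¬ (u =ᵐ[volume.restrict Ω] 0) ∧ (∫ x in Ω, u x) = 0 ∧
    ∀ v : Euc N → ℝ, memHs N s Ω v →
      cNs N s / 2 * bform N s Ω u v = mu1 N s Ω * ∫ x in Ω, u x * v x

/-- Reflection `σ_e(x) = x - 2(x·e)e` across the hyperplane `{x·e = 0}`. -/
def reflect (N : ℕ) (e x : Euc N) : Euc N := x - (2 * (inner ℝ x e : ℝ)) • e

/-- The polarization `P_e u` with respect to the hyperplane `{x·e = 0}`. -/
def polarize (N : ℕ) (e : Euc N) (u : Euc N → ℝ) (x : Euc N) : ℝ :=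
  if 0 ≤ (inner ℝ x e : ℝ) then min (u x) (u (reflect N e x))
  else max (u x) (u (reflect N e x))

/-- Foliated Schwarz symmetry with respect to `p`. -/
def FoliatedSchwarz (N : ℕ) (p : Euc N) (u : Euc N → ℝ) : Prop :=
  ∃ uh : ℝ → ℝ → ℝ, (∀ r : ℝ, AntitoneOn (uh r) (Icc 0 Real.pi)) ∧
    ∀ x : Euc N, x ≠ 0 → u x = uh ‖x‖ (Real.arccos ((inner ℝ x p : ℝ) / ‖x‖))

/-- Radial symmetry (pointwise). -/
def Radial (N : ℕ) (u : Euc N → ℝ) : Prop := ∃ f : ℝ → ℝ, ∀ x, u x = f ‖x‖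

/-- Radial symmetry (a.e.). -/
def RadialAE (N : ℕ) (u : Euc N → ℝ) : Prop :=
  ∃ f : ℝ → ℝ, ∀ᵐ x : Euc N ∂volume, u x = f ‖x‖

/-- The set `{x ∈ Ω : u x ≠ 0}` has exactly two connected components. -/
def TwoNodal (N : ℕ) (Ω : Set (Euc N)) (u : Euc N → ℝ) : Prop :=
  Nat.card (ConnectedComponents {x : Euc N // x ∈ Ω ∧ u x ≠ 0}) = 2

/-- Bounded Lipschitz domain: open, bounded, connected, and near every boundary point the set
is the region above the graph of a Lipschitz function in some direction `e`. -/
def IsLipschitzDomain (N : ℕ) (Ω : Set (Euc N)) : Prop :=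
  IsOpen Ω ∧ IsBounded Ω ∧ IsConnected Ω ∧
    ∀ x ∈ frontier Ω, ∃ e : Euc N, ‖e‖ = 1 ∧ ∃ r : ℝ, 0 < r ∧
      ∃ (L : NNReal) (f : Euc N → ℝ), LipschitzWith L f ∧
        ∀ y ∈ Metric.ball x r,
          (y ∈ Ω ↔ f (y - ((inner ℝ y e : ℝ)) • e) < (inner ℝ y e : ℝ))

/-- `g` is a weak gradient of `u` in `Ω`, square-integrable on `Ω`. -/
def IsWeakGradient (N : ℕ) (Ω : Set (Euc N)) (u : Euc N → ℝ) (g : Euc N → Euc N) : Prop :=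
  Measurable g ∧ (∫⁻ x in Ω, ENNReal.ofReal (‖g x‖ ^ 2)) < ⊤ ∧
    ∀ φ : Euc N → ℝ, ContDiff ℝ (⊤ : ℕ∞) φ → HasCompactSupport φ → tsupport φ ⊆ Ω →
      ∀ i : Fin N, (∫ x in Ω, u x * fderiv ℝ φ x (EuclideanSpace.single i 1)) =
        - ∫ x in Ω, g x i * φ x

/-- Membership in `H¹(Ω)`. -/
def memH1 (N : ℕ) (Ω : Set (Euc N)) (u : Euc N → ℝ) : Prop :=
  Measurable u ∧ l2sq N Ω u < ⊤ ∧ ∃ g, IsWeakGradient N Ω u g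

/-- `∫_Ω |∇u|²`, as an extended real number. -/
def gradSq (N : ℕ) (Ω : Set (Euc N)) (u : Euc N → ℝ) : ℝ≥0∞ :=
  ⨅ (g : Euc N → Euc N) (_ : IsWeakGradient N Ω u g), ∫⁻ x in Ω, ENNReal.ofReal (‖g x‖ ^ 2)

/-- Rayleigh quotient for the fractional Neumann problem. -/
def rayleighS (N : ℕ) (s : ℝ) (Ω : Set (Euc N)) (u : Euc N → ℝ) : ℝ≥0∞ :=
  ENNReal.ofReal (cNs N s / 2) * semiSq N s Ω u / l2sq N Ω u

/-- Rayleigh quotient for the local Neumann problem. -/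
def rayleigh1 (N : ℕ) (Ω : Set (Euc N)) (u : Euc N → ℝ) : ℝ≥0∞ :=
  gradSq N Ω u / l2sq N Ω u

/-- The min-max value `μ_n^{(s)}(Ω)` over `n`-dimensional subspaces of `H^s_{Ω,0} ∩ L²₀(Ω)`. -/
def muNs (N : ℕ) (s : ℝ) (Ω : Set (Euc N)) (n : ℕ) : ℝ≥0∞ :=
  ⨅ (A : Submodule ℝ (Euc N → ℝ)) (_ : Module.finrank ℝ A = n ∧
      (∀ u ∈ A, memHs N s Ω u ∧ (∫ x in Ω, u x) = 0) ∧
      (∀ u ∈ A, u =ᵐ[(volume : Measure (Euc N))] 0 → u = 0)),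
    ⨆ (u : Euc N → ℝ) (_ : u ∈ A ∧ u ≠ 0), rayleighS N s Ω u

/-- The min-max value over `n`-dimensional subspaces of `H̃^s_{Ω,0} ∩ L²₀(Ω)`. -/
def muNsTilde (N : ℕ) (s : ℝ) (Ω : Set (Euc N)) (n : ℕ) : ℝ≥0∞ :=
  ⨅ (A : Submodule ℝ (Euc N → ℝ)) (_ : Module.finrank ℝ A = n ∧
      (∀ u ∈ A, memHsTilde N s Ω u ∧ (∫ x in Ω, u x) = 0) ∧
      (∀ u ∈ A, u =ᵐ[(volume : Measure (Euc N))] 0 → u = 0)),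
    ⨆ (u : Euc N → ℝ) (_ : u ∈ A ∧ u ≠ 0), rayleighS N s Ω u

/-- The min-max value `μ_n^{(1)}(Ω)` over `n`-dimensional subspaces of `H¹(Ω) ∩ L²₀(Ω)`. -/
def muN1 (N : ℕ) (Ω : Set (Euc N)) (n : ℕ) : ℝ≥0∞ :=
  ⨅ (A : Submodule ℝ (Euc N → ℝ)) (_ : Module.finrank ℝ A = n ∧
      (∀ u ∈ A, memH1 N Ω u ∧ (∫ x in Ω, u x) = 0) ∧
      (∀ u ∈ A, u =ᵐ[volume.restrict Ω] 0 → u = 0)),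
    ⨆ (u : Euc N → ℝ) (_ : u ∈ A ∧ u ≠ 0), rayleigh1 N Ω u

/-- `μ_n^{(s)}(Ω)` including `μ₀^{(s)}(Ω) := 0`. -/
def muNsFull (N : ℕ) (s : ℝ) (Ω : Set (Euc N)) (n : ℕ) : ℝ≥0∞ :=
  if n = 0 then 0 else muNs N s Ω n

/-- `μ_n^{(1)}(Ω)` including `μ₀^{(1)}(Ω) := 0`. -/
def muN1Full (N : ℕ) (Ω : Set (Euc N)) (n : ℕ) : ℝ≥0∞ :=
  if n = 0 then 0 else muN1 N Ω n

/-- The squared `H^s_{Ω,0}`-seminorm of the `s`-minimal extension of `u`: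
the minimal value of `[v]²` over `v ∈ H^s_{Ω,0}` with `v = u` a.e. in `Ω`. -/
def minExtSemiSq (N : ℕ) (s : ℝ) (Ω : Set (Euc N)) (u : Euc N → ℝ) : ℝ≥0∞ :=
  ⨅ (v : Euc N → ℝ) (_ : memHs N s Ω v ∧ v =ᵐ[volume.restrict Ω] u), semiSq N s Ω v

/-- `ω_{N-1}`: volume of the unit ball of `ℝ^{N-1}`. -/
def omegaPrev (N : ℕ) : ℝ := (volume (Metric.ball (0 : Euc (N - 1)) 1)).toReal

/-- Membership in `L²₀(Ω)`. -/
def memL20 (N : ℕ) (Ω : Set (Euc N)) (u : Euc N → ℝ) : Prop :=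
  Measurable u ∧ l2sq N Ω u < ⊤ ∧ (∫ x in Ω, u x) = 0

/-- The functional `F_s` (value `+∞` outside `H^s(Ω)`). -/
def Fs (N : ℕ) (s : ℝ) (Ω : Set (Euc N)) (u : Euc N → ℝ) : ℝ≥0∞ :=
  ENNReal.ofReal (1 - s) * minExtSemiSq N s Ω u

/-- The functional `F₁` (value `+∞` outside `H¹(Ω)`). -/
def F1 (N : ℕ) (Ω : Set (Euc N)) (u : Euc N → ℝ) : ℝ≥0∞ :=
  ENNReal.ofReal (omegaPrev N / (2 * N)) * gradSq N Ω u

end FracNeumann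
namespace FracNeumann

/-- Weighted difference quotient. -/
def dd (N : ℕ) (s : ℝ) (U : Euc N → ℝ) : Euc N × Euc N → ℝ :=
  fun q => (U q.1 - U q.2) / √(kern N s q.1 q.2)

lemma kern_nonneg (N : ℕ) (s : ℝ) (x y : Euc N) : 0 ≤ kern N s x y :=
  Real.rpow_nonneg (norm_nonneg _) _

lemma kern_pos {N : ℕ} {s : ℝ} {x y : Euc N} (h : x ≠ y) : 0 < kern N s x y :=
  Real.rpow_pos_of_pos (norm_pos_iff.2 (sub_ne_zero.2 h)) _

lemma kern_symm (N : ℕ) (s : ℝ) (x y : Euc N) : kern N s x y = kern N s y x := by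
  unfold kern; rw [norm_sub_rev]

lemma measurable_kern (N : ℕ) (s : ℝ) :
    Measurable (fun q : Euc N × Euc N => kern N s q.1 q.2) := by
  unfold kern
  exact ((measurable_fst.sub measurable_snd).norm).pow_const _

lemma measurable_dd {N : ℕ} {s : ℝ} {U : Euc N → ℝ} (hU : Measurable U) :
    Measurable (dd N s U) := by
  unfold dd
  exact ((hU.comp measurable_fst).sub (hU.comp measurable_snd)).div (measurable_kern N s).sqrt

lemma dd_add (N : ℕ) (s : ℝ) (U V : Euc N → ℝ) : dd N s (U + V) = dd N s U + dd N s V := by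
  ext q; simp only [dd, Pi.add_apply]; ring

lemma dd_sub (N : ℕ) (s : ℝ) (U V : Euc N → ℝ) : dd N s (U - V) = dd N s U - dd N s V := by
  ext q; simp only [dd, Pi.sub_apply]; ring

lemma dd_smul (N : ℕ) (s : ℝ) (c : ℝ) (U : Euc N → ℝ) : dd N s (c • U) = c • dd N s U := by
  ext q; simp only [dd, Pi.smul_apply, smul_eq_mul]; ring

lemma dd_mul (N : ℕ) (s : ℝ) (U V : Euc N → ℝ) (q : Euc N × Euc N) :
    dd N s U q * dd N s V q = (U q.1 - U q.2) * (V q.1 - V q.2) / kern N s q.1 q.2 := by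
  unfold dd
  rw [div_mul_div_comm, Real.mul_self_sqrt (kern_nonneg _ _ _ _)]

lemma eLpNorm_two_sq {α : Type*} [MeasurableSpace α] (μ : Measure α) (f : α → ℝ) :
    eLpNorm f 2 μ ^ 2 = ∫⁻ x, ENNReal.ofReal (f x ^ 2) ∂μ := by
  have := eLpNorm_nnreal_pow_eq_lintegral (p := 2) (f := f) (μ := μ) (by norm_num)
  have h2 : ((2 : ℝ≥0) : ℝ≥0∞) = 2 := rfl
  rw [h2] at this
  have h3 : ((2 : ℝ≥0) : ℝ) = ((2 : ℕ) : ℝ) := by norm_num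
  rw [h3] at this
  simp only [ENNReal.rpow_natCast] at this
  rw [this]
  refine lintegral_congr fun x => ?_
  rw [← sq_abs, ENNReal.ofReal_pow (abs_nonneg _), Real.enorm_eq_ofReal_abs]

lemma memLp_two_iff {α : Type*} [MeasurableSpace α] (μ : Measure α) {f : α → ℝ}
    (hf : Measurable f) : MemLp f 2 μ ↔ ∫⁻ x, ENNReal.ofReal (f x ^ 2) ∂μ < ⊤ := by
  rw [← eLpNorm_two_sq]
  constructor
  · intro h; exact ENNReal.pow_lt_top h.2
  · intro h
    refine ⟨hf.aestronglyMeasurable, ?_⟩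
    by_contra h'
    rw [not_lt, top_le_iff] at h'
    rw [h'] at h
    simp at h

lemma lintegral_dd (N : ℕ) (s : ℝ) (ν : Measure (Euc N × Euc N)) (U : Euc N → ℝ) :
    ∫⁻ q, ENNReal.ofReal ((U q.1 - U q.2) ^ 2 / kern N s q.1 q.2) ∂ν
      = ∫⁻ q, ENNReal.ofReal (dd N s U q ^ 2) ∂ν := by
  refine lintegral_congr fun q => ?_
  rw [sq (dd N s U q), dd_mul, ← sq]

/-- The subspace of pairs `(U, dU)`. -/
def VV (N : ℕ) (s : ℝ) (μ : Measure (Euc N)) (ν : Measure (Euc N × Euc N)) :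
    Submodule ℝ (Lp ℝ 2 μ × Lp ℝ 2 ν) where
  carrier := {p | ∃ U : Euc N → ℝ, Measurable U ∧ p.1 =ᵐ[μ] U ∧ p.2 =ᵐ[ν] dd N s U}
  add_mem' := by
    rintro a b ⟨U, hU, h1, h2⟩ ⟨V, hV, h3, h4⟩
    refine ⟨U + V, hU.add hV, (Lp.coeFn_add _ _).trans (h1.add h3), ?_⟩
    rw [dd_add]
    exact (Lp.coeFn_add _ _).trans (h2.add h4)
  zero_mem' := by
    refine ⟨0, measurable_zero, Lp.coeFn_zero _ _ _, ?_⟩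
    refine (Lp.coeFn_zero _ _ _).trans (Eventually.of_forall fun q => ?_)
    simp [dd]
  smul_mem' := by
    rintro c a ⟨U, hU, h1, h2⟩
    refine ⟨c • U, hU.const_smul c, (Lp.coeFn_smul _ _).trans (h1.const_smul c), ?_⟩
    rw [dd_smul]
    exact (Lp.coeFn_smul _ _).trans (h2.const_smul c)

/-- Compatibility of the measures needed for the closedness lemma. -/
structure Adm {N : ℕ} (τ μ : Measure (Euc N)) (ν : Measure (Euc N × Euc N)) : Prop where
  fub : ∀ p : Euc N × Euc N → Prop, (∀ᵐ q ∂ν, p q) → ∀ᵐ y ∂μ, ∀ᵐ x ∂τ, p (x, y)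
  proj : ∀ p : Euc N → Prop, (∀ᵐ x ∂τ, p x) → ∀ᵐ q ∂ν, p q.1 ∧ p q.2
  ac : μ ≪ τ
  atom : ∀ y, ∀ᵐ x ∂τ, x ≠ y
  ne : μ ≠ 0

lemma closed_aux {N : ℕ} {s : ℝ} {τ μ : Measure (Euc N)} {ν : Measure (Euc N × Euc N)}
    (hA : Adm τ μ ν) (U : ℕ → Euc N → ℝ) (hU : ∀ n, Measurable (U n)) (f : Euc N → ℝ)
    (g : Euc N × Euc N → ℝ)
    (hf : ∀ᵐ x ∂μ, Tendsto (fun n => U n x) atTop (𝓝 (f x)))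
    (hg : ∀ᵐ q ∂ν, Tendsto (fun n => dd N s (U n) q) atTop (𝓝 (g q))) :
    ∃ V : Euc N → ℝ, Measurable V ∧ f =ᵐ[μ] V ∧ g =ᵐ[ν] dd N s V := by
  have h1 := hA.fub _ hg
  have : (ae μ).NeBot := ae_neBot.2 hA.ne
  obtain ⟨y, hy1, hy2⟩ := (hf.and h1).exists
  have h3 : ∀ᵐ x ∂τ, ∃ l, Tendsto (fun n => U n x) atTop (𝓝 l) := by
    filter_upwards [hy2, hA.atom y] with x hx hxy
    have hk : √(kern N s x y) ≠ 0 := (Real.sqrt_pos.2 (kern_pos hxy)).ne'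
    refine ⟨_, ((hx.mul_const (√(kern N s x y))).add hy1).congr fun n => ?_⟩
    simp only [dd]
    field_simp
    ring
  obtain ⟨V, hV, hVt⟩ := measurable_limit_of_tendsto_metrizable_ae
    (fun n => (hU n).aemeasurable) h3
  refine ⟨V, hV, ?_, ?_⟩
  · filter_upwards [hf, hA.ac.ae_le hVt] with x hx hx'
    exact tendsto_nhds_unique hx hx'
  · filter_upwards [hg, hA.proj _ hVt] with q hq hq'
    refine tendsto_nhds_unique hq ?_
    exact (hq'.1.sub hq'.2).div_const _

lemma VV_closed {N : ℕ} {s : ℝ} {τ μ : Measure (Euc N)} {ν : Measure (Euc N × Euc N)}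
    (hA : Adm τ μ ν) : IsClosed (VV N s μ ν : Set (Lp ℝ 2 μ × Lp ℝ 2 ν)) := by
  rw [← isSeqClosed_iff_isClosed]
  intro p p0 hp hlim
  choose U hU h1 h2 using hp
  have hl1 : Tendsto (fun n => (p n).1) atTop (𝓝 p0.1) :=
    (continuous_fst.tendsto _).comp hlim
  have hl2 : Tendsto (fun n => (p n).2) atTop (𝓝 p0.2) :=
    (continuous_snd.tendsto _).comp hlim
  obtain ⟨a, ha, ha'⟩ := (tendstoInMeasure_of_tendsto_Lp hl1).exists_seq_tendsto_ae
  obtain ⟨b, hb, hb'⟩ := (tendstoInMeasure_of_tendsto_Lp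
    (hl2.comp ha.tendsto_atTop)).exists_seq_tendsto_ae
  refine closed_aux hA (fun n => U (a (b n))) (fun n => hU _) _ _ ?_ ?_
  · filter_upwards [ha', ae_all_iff.2 h1] with x hx hx'
    exact (hx.comp hb.tendsto_atTop).congr fun n => hx' _
  · filter_upwards [hb', ae_all_iff.2 h2] with x hx hx'
    exact hx.congr fun n => hx' _

lemma measurableSet_reg (N : ℕ) (Ω : Set (Euc N)) : MeasurableSet (reg N Ω) :=
  (measurable_fst isClosed_closure.measurableSet).union
    (measurable_snd isClosed_closure.measurableSet)

lemma restrict_prod_ae {N : ℕ} {T Ω : Set (Euc N)}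
    {p : Euc N × Euc N → Prop} {D : Set (Euc N × Euc N)} (hD : T ×ˢ Ω ⊆ D)
    (h : ∀ᵐ q ∂((volume : Measure (Euc N × Euc N)).restrict D), p q) :
    ∀ᵐ y ∂(volume.restrict Ω), ∀ᵐ x ∂(volume.restrict T), p (x, y) := by
  have h1 := ae_mono (Measure.restrict_mono hD le_rfl) h
  rw [Measure.volume_eq_prod, ← Measure.prod_restrict] at h1
  have h2 : ∀ᵐ q ∂((volume.restrict Ω).prod (volume.restrict T)), p q.swap := by
    rw [← Measure.prod_swap] at h1
    exact ae_of_ae_map measurable_swap.aemeasurable h1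
  exact Measure.ae_ae_of_ae_prod h2

lemma proj_ae {N : ℕ} {p : Euc N → Prop} (h : ∀ᵐ x : Euc N, p x) :
    ∀ᵐ q : Euc N × Euc N, p q.1 ∧ p q.2 := by
  rw [Measure.volume_eq_prod]
  exact (Measure.quasiMeasurePreserving_fst.ae h).and (Measure.quasiMeasurePreserving_snd.ae h)

lemma nontriv {N : ℕ} (hN : 2 ≤ N) : Nontrivial (Euc N) := by
  have : Nonempty (Fin N) := ⟨⟨0, by omega⟩⟩
  infer_instance

lemma vol_noAtoms {N : ℕ} (hN : 2 ≤ N) : NullSingletonClass (volume : Measure (Euc N)) := by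
  have := nontriv hN
  infer_instance

lemma restrict_ne_zero {N : ℕ} {Ω : Set (Euc N)} (hopen : IsOpen Ω) (hne : Ω.Nonempty) :
    (volume : Measure (Euc N)).restrict Ω ≠ 0 := by
  rw [Ne, Measure.restrict_eq_zero]
  exact (hopen.measure_pos volume hne).ne'

lemma adm_reg {N : ℕ} (hN : 2 ≤ N) {Ω : Set (Euc N)} (hopen : IsOpen Ω) (hne : Ω.Nonempty) :
    Adm (volume : Measure (Euc N)) (volume.restrict Ω) (volume.restrict (reg N Ω)) where
  fub := by
    intro p hp
    have := restrict_prod_ae (T := univ) (Ω := Ω) (D := reg N Ω)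
      (fun q hq => Or.inr (subset_closure hq.2)) hp
    simpa using this
  proj := fun p hp => ae_restrict_of_ae (proj_ae hp)
  ac := Measure.absolutelyContinuous_of_le Measure.restrict_le_self
  atom := by
    have := vol_noAtoms hN
    intro y
    exact Measure.ae_ne volume y
  ne := restrict_ne_zero hopen hne

lemma adm_omega {N : ℕ} (hN : 2 ≤ N) {Ω : Set (Euc N)} (hopen : IsOpen Ω) (hne : Ω.Nonempty) :
    Adm (volume.restrict Ω) (volume.restrict Ω)
      ((volume.restrict (reg N Ω)).restrict (Ω ×ˢ Ω)) where
  fub := by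
    intro p hp
    rw [Measure.restrict_restrict (hopen.measurableSet.prod hopen.measurableSet)] at hp
    exact restrict_prod_ae (T := Ω) (Ω := Ω) (D := (Ω ×ˢ Ω) ∩ reg N Ω)
      (fun q hq => ⟨hq, Or.inr (subset_closure hq.2)⟩) hp
  proj := by
    intro p hp
    rw [Measure.restrict_restrict (hopen.measurableSet.prod hopen.measurableSet)]
    rw [ae_restrict_iff' hopen.measurableSet] at hp
    rw [ae_restrict_iff' ((hopen.measurableSet.prod hopen.measurableSet).inter
      (measurableSet_reg N Ω))]
    filter_upwards [proj_ae hp] with q hq hq'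
    exact ⟨hq.1 hq'.1.1, hq.2 hq'.1.2⟩
  ac := Measure.AbsolutelyContinuous.rfl
  atom := by
    have := vol_noAtoms hN
    intro y
    exact ae_restrict_of_ae (Measure.ae_ne volume y)
  ne := restrict_ne_zero hopen hne

lemma semiSqOn_eq {N : ℕ} {s : ℝ} {Ω : Set (Euc N)} (hopen : IsOpen Ω) (U : Euc N → ℝ) :
    semiSqOn N s Ω U = ∫⁻ q, ENNReal.ofReal (dd N s U q ^ 2)
      ∂((volume.restrict (reg N Ω)).restrict (Ω ×ˢ Ω)) := by
  rw [Measure.restrict_restrict (hopen.measurableSet.prod hopen.measurableSet),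
    inter_eq_left.2 (show Ω ×ˢ Ω ⊆ reg N Ω from fun q hq => Or.inr (subset_closure hq.2)),
    ← lintegral_dd]
  rfl

lemma semiSq_eq {N : ℕ} {s : ℝ} {Ω : Set (Euc N)} (U : Euc N → ℝ) :
    semiSq N s Ω U = ∫⁻ q, ENNReal.ofReal (dd N s U q ^ 2) ∂(volume.restrict (reg N Ω)) := by
  rw [← lintegral_dd]
  rfl

lemma lp_norm_sq {α : Type*} [MeasurableSpace α] {μ : Measure α} (f : Lp ℝ 2 μ) {g : α → ℝ}
    (h : f =ᵐ[μ] g) : ENNReal.ofReal (‖f‖ ^ 2) = ∫⁻ x, ENNReal.ofReal (g x ^ 2) ∂μ := by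
  rw [← eLpNorm_two_sq, ← eLpNorm_congr_ae h, Lp.norm_def, ENNReal.ofReal_pow (by positivity),
    ENNReal.ofReal_toReal (Lp.eLpNorm_ne_top f)]

/-- The restriction map. -/
def resMap {N : ℕ} (μ : Measure (Euc N)) (ν : Measure (Euc N × Euc N)) (S : Set (Euc N × Euc N)) :
    (Lp ℝ 2 μ × Lp ℝ 2 ν) →L[ℝ] (Lp ℝ 2 μ × Lp ℝ 2 (ν.restrict S)) :=
  (ContinuousLinearMap.fst ℝ _ _).prod
      ((LpToLpRestrictCLM _ ℝ ℝ ν 2 S).comp (ContinuousLinearMap.snd ℝ _ _))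

lemma resMap_fst {N : ℕ} {μ : Measure (Euc N)} {ν : Measure (Euc N × Euc N)}
    {S : Set (Euc N × Euc N)} (p : Lp ℝ 2 μ × Lp ℝ 2 ν) : (resMap μ ν S p).1 = p.1 := rfl

lemma resMap_snd {N : ℕ} {μ : Measure (Euc N)} {ν : Measure (Euc N × Euc N)}
    {S : Set (Euc N × Euc N)} (p : Lp ℝ 2 μ × Lp ℝ 2 ν) :
    (resMap μ ν S p).2 =ᵐ[ν.restrict S] p.2 := LpToLpRestrictCLM_coeFn ℝ S p.2

lemma resMap_mem {N : ℕ} {s : ℝ} {μ : Measure (Euc N)} {ν : Measure (Euc N × Euc N)}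
    {S : Set (Euc N × Euc N)} {p : Lp ℝ 2 μ × Lp ℝ 2 ν} (hp : p ∈ VV N s μ ν) :
    resMap μ ν S p ∈ VV N s μ (ν.restrict S) := by
  obtain ⟨U, hU, h1, h2⟩ := hp
  refine ⟨U, hU, ?_, (resMap_snd p).trans (ae_mono Measure.restrict_le_self h2)⟩
  rw [resMap_fst]; exact h1

/-- The restriction map between the closed subspaces. -/
def resMapV {N : ℕ} (s : ℝ) (μ : Measure (Euc N)) (ν : Measure (Euc N × Euc N))
    (S : Set (Euc N × Euc N)) : VV N s μ ν →L[ℝ] VV N s μ (ν.restrict S) :=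
  ((resMap μ ν S).comp (VV N s μ ν).subtypeL).codRestrict (VV N s μ (ν.restrict S))
    (fun p => resMap_mem p.2)

lemma resMapV_coe {N : ℕ} {s : ℝ} {μ : Measure (Euc N)} {ν : Measure (Euc N × Euc N)}
    {S : Set (Euc N × Euc N)} (p : VV N s μ ν) :
    (resMapV s μ ν S p : Lp ℝ 2 μ × Lp ℝ 2 (ν.restrict S)) = resMap μ ν S p := rfl

lemma open_map_bound {N : ℕ} {s : ℝ} {τ τ' μ : Measure (Euc N)} {ν : Measure (Euc N × Euc N)}
    {S : Set (Euc N × Euc N)} (hA : Adm τ μ ν) (hA' : Adm τ' μ (ν.restrict S))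
    (hsurj : ∀ p ∈ VV N s μ (ν.restrict S), ∃ q ∈ VV N s μ ν, resMap μ ν S q = p) :
    ∃ C : ℝ, 0 < C ∧ ∀ p ∈ VV N s μ (ν.restrict S), ∃ q ∈ VV N s μ ν, resMap μ ν S q = p ∧
      ‖q‖ ≤ C * ‖p‖ := by
  have : CompleteSpace (VV N s μ ν) := (VV_closed hA).completeSpace_coe
  have : CompleteSpace (VV N s μ (ν.restrict S)) := (VV_closed hA').completeSpace_coe
  have hs : Function.Surjective (resMapV s μ ν S) := by
    rintro ⟨p, hp⟩
    obtain ⟨q, hq, hqp⟩ := hsurj p hp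
    exact ⟨⟨q, hq⟩, Subtype.ext hqp⟩
  obtain ⟨C, hC, hCb⟩ := (resMapV s μ ν S).exists_preimage_norm_le hs
  refine ⟨C, hC, fun p hp => ?_⟩
  obtain ⟨q, hq, hqn⟩ := hCb ⟨p, hp⟩
  refine ⟨q, q.2, ?_, hqn⟩
  rw [← resMapV_coe, hq]

lemma norm_bound {E F G : Type*} [NormedAddCommGroup E] [NormedAddCommGroup F]
    [NormedAddCommGroup G] (p : E × F) (a : E) (b : G) (C : ℝ) (h : ‖p‖ ≤ C * ‖(a, b)‖) :
    ‖p.2‖ ^ 2 ≤ C ^ 2 * (‖a‖ ^ 2 + ‖b‖ ^ 2) := by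
  have e1 : ‖p.2‖ ≤ ‖p‖ := norm_snd_le p
  have e3 : ‖(a, b)‖ ^ 2 ≤ ‖a‖ ^ 2 + ‖b‖ ^ 2 := by
    rw [Prod.norm_def]
    rcases max_choice ‖a‖ ‖b‖ with h | h <;> simp only [h] <;>
      nlinarith [sq_nonneg ‖a‖, sq_nonneg ‖b‖]
  calc ‖p.2‖ ^ 2 ≤ (C * ‖(a, b)‖) ^ 2 := pow_le_pow_left₀ (norm_nonneg _) (e1.trans h) 2
    _ = C ^ 2 * ‖(a, b)‖ ^ 2 := by ring
    _ ≤ _ := by gcongr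

/-- Quantitative extension property (open mapping theorem). -/
lemma ext_bound {N : ℕ} (hN : 2 ≤ N) {s : ℝ} {Ω : Set (Euc N)} (hopen : IsOpen Ω)
    (hne : Ω.Nonempty)
    (hext : ∀ u : Euc N → ℝ, memHsOn N s Ω u →
      ∃ U : Euc N → ℝ, memHs N s Ω U ∧ U =ᵐ[volume.restrict Ω] u) :
    ∃ C : ℝ, 0 < C ∧ ∀ u : Euc N → ℝ, memHsOn N s Ω u →
      ∃ U : Euc N → ℝ, Measurable U ∧ U =ᵐ[volume.restrict Ω] u ∧
        semiSq N s Ω U ≤ ENNReal.ofReal C * (l2sq N Ω u + semiSqOn N s Ω u) := by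
  have hA := adm_reg hN hopen hne
  have hA' := adm_omega hN hopen hne
  have key := open_map_bound (s := s) hA hA' (by
    rintro p ⟨u, hu, h1, h2⟩
    have hm : memHsOn N s Ω u := by
      refine ⟨hu, ?_, ?_⟩
      · unfold l2sq
        rw [← lp_norm_sq p.1 h1]; exact ENNReal.ofReal_lt_top
      · rw [semiSqOn_eq hopen, ← lp_norm_sq p.2 h2]; exact ENNReal.ofReal_lt_top
    obtain ⟨U, hU, hUu⟩ := hext u hm
    have m1 : MemLp U 2 (volume.restrict Ω) := (memLp_two_iff _ hU.1).2 hU.2.1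
    have m2 : MemLp (dd N s U) 2 (volume.restrict (reg N Ω)) := by
      refine (memLp_two_iff _ (measurable_dd hU.1)).2 ?_
      rw [← semiSq_eq]; exact hU.2.2
    refine ⟨(m1.toLp U, m2.toLp _), ⟨U, hU.1, m1.coeFn_toLp, m2.coeFn_toLp⟩, ?_⟩
    refine Prod.ext ?_ ?_
    · rw [resMap_fst]
      apply Lp.ext
      exact (m1.coeFn_toLp).trans (hUu.trans h1.symm)
    · apply Lp.ext
      have e1 : (m2.toLp (dd N s U) : Euc N × Euc N → ℝ)
          =ᵐ[(volume.restrict (reg N Ω)).restrict (Ω ×ˢ Ω)] dd N s U :=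
        ae_mono Measure.restrict_le_self m2.coeFn_toLp
      refine (resMap_snd _).trans (e1.trans (EventuallyEq.trans ?_ h2.symm))
      filter_upwards [hA'.proj _ hUu] with q hq
      simp only [dd, hq.1, hq.2])
  obtain ⟨C, hC, hCb⟩ := key
  refine ⟨C ^ 2, by positivity, fun u hu => ?_⟩
  have m1 : MemLp u 2 (volume.restrict Ω) := (memLp_two_iff _ hu.1).2 hu.2.1
  have m2 : MemLp (dd N s u) 2 ((volume.restrict (reg N Ω)).restrict (Ω ×ˢ Ω)) := by
    refine (memLp_two_iff _ (measurable_dd hu.1)).2 ?_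
    rw [← semiSqOn_eq hopen]; exact hu.2.2
  obtain ⟨p, ⟨U, hU, h1, h2⟩, hp, hpn⟩ :=
    hCb (m1.toLp u, m2.toLp _) ⟨u, hu.1, m1.coeFn_toLp, m2.coeFn_toLp⟩
  refine ⟨U, hU, ?_, ?_⟩
  · have : p.1 = m1.toLp u := by rw [← resMap_fst (S := Ω ×ˢ Ω) p, hp]
    rw [this] at h1
    exact h1.symm.trans m1.coeFn_toLp
  · rw [semiSq_eq, ← lp_norm_sq p.2 h2, semiSqOn_eq hopen]
    unfold l2sq
    rw [← lp_norm_sq (m1.toLp u) m1.coeFn_toLp, ← lp_norm_sq (m2.toLp _) m2.coeFn_toLp,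
      ← ENNReal.ofReal_add (by positivity) (by positivity), ← ENNReal.ofReal_mul (by positivity)]
    exact ENNReal.ofReal_le_ofReal (norm_bound _ _ _ _ hpn)

/-- Profile of the rescaled kernel. -/
def GG (N : ℕ) (s : ℝ) (t : ℝ) : ℝ := min 1 (4 * t ^ 2) / t ^ ((N : ℝ) + 2 * s)

lemma measurable_GG (N : ℕ) (s : ℝ) : Measurable (GG N s) := by
  unfold GG
  exact (measurable_const.min ((measurable_id.pow_const 2).const_mul 4)).div
    (measurable_id.pow_const _)

lemma GG_nonneg (N : ℕ) (s : ℝ) {t : ℝ} (ht : 0 ≤ t) : 0 ≤ GG N s t := by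
  unfold GG; positivity

lemma integrable_GG {N : ℕ} (hN : 2 ≤ N) {s : ℝ} (hs : s ∈ Set.Ioo (0 : ℝ) 1) :
    Integrable (fun w : Euc N => GG N s ‖w‖) := by
  have := nontriv hN
  rw [integrable_fun_norm_addHaar]
  have hm : Measurable (fun y : ℝ => y ^ (Module.finrank ℝ (Euc N) - 1) • GG N s y) :=
    (measurable_id.pow_const _).smul (measurable_GG N s)
  have hd : Module.finrank ℝ (Euc N) = N := by simp
  rw [← Ioc_union_Ioi_eq_Ioi (zero_le_one : (0 : ℝ) ≤ 1)]
  have key : ∀ y : ℝ, 0 < y → y ^ (N - 1) / y ^ ((N : ℝ) + 2 * s) = y ^ (-1 - 2 * s) := by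
    intro y hy
    rw [← Real.rpow_natCast, ← Real.rpow_sub hy]
    congr 1
    rw [Nat.cast_sub (by omega)]; push_cast; ring
  refine IntegrableOn.union ?_ ?_
  · have h1 : IntegrableOn (fun y : ℝ => 4 * y ^ (1 - 2 * s)) (Ioc 0 1) := by
      have := (intervalIntegral.intervalIntegrable_rpow' (a := 0) (b := 1)
        (r := 1 - 2 * s) (by linarith [hs.2])).const_mul 4
      rwa [intervalIntegrable_iff_integrableOn_Ioc_of_le zero_le_one] at this
    refine Integrable.mono' h1 hm.aestronglyMeasurable ?_
    refine (ae_restrict_iff' measurableSet_Ioc).2 (Eventually.of_forall fun y hy => ?_)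
    have hy0 := hy.1
    rw [hd, Real.norm_of_nonneg (smul_nonneg (by positivity) (GG_nonneg _ _ hy0.le)), smul_eq_mul]
    unfold GG
    calc y ^ (N - 1) * (min 1 (4 * y ^ 2) / y ^ ((N : ℝ) + 2 * s))
        ≤ y ^ (N - 1) * ((4 * y ^ 2) / y ^ ((N : ℝ) + 2 * s)) := by
          gcongr; exact min_le_right _ _
      _ = 4 * (y ^ 2 * (y ^ (N - 1) / y ^ ((N : ℝ) + 2 * s))) := by ring
      _ = 4 * y ^ (1 - 2 * s) := by
          rw [key y hy0, ← Real.rpow_natCast y 2, ← Real.rpow_add hy0]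
          congr 2; push_cast; ring
  · refine Integrable.mono' (integrableOn_Ioi_rpow_of_lt (a := -1 - 2 * s)
      (by linarith [hs.1]) zero_lt_one) hm.aestronglyMeasurable ?_
    refine (ae_restrict_iff' measurableSet_Ioi).2 (Eventually.of_forall fun y hy => ?_)
    have hy0 : (0 : ℝ) < y := zero_lt_one.trans hy
    rw [hd, Real.norm_of_nonneg (smul_nonneg (by positivity) (GG_nonneg _ _ hy0.le)), smul_eq_mul]
    unfold GG
    calc y ^ (N - 1) * (min 1 (4 * y ^ 2) / y ^ ((N : ℝ) + 2 * s))
        ≤ y ^ (N - 1) * (1 / y ^ ((N : ℝ) + 2 * s)) := by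
          gcongr; exact min_le_left _ _
      _ = _ := by rw [← key y hy0]; ring

lemma scale_lintegral {N : ℕ} (F : Euc N → ℝ≥0∞) (hF : Measurable F) (y : Euc N) {r : ℝ}
    (hr : 0 < r) : ∫⁻ z, F z = ENNReal.ofReal (r ^ N) * ∫⁻ w, F (y + r • w) := by
  have h1 : ∫⁻ w, F (y + r • w) = ∫⁻ z, F (y + z) ∂(Measure.map (r • ·) volume) := by
    exact (lintegral_map (f := fun z => F (y + z)) (hF.comp (measurable_const_add y))
      (measurable_const_smul r)).symm
  rw [h1, Measure.map_addHaar_smul volume hr.ne', lintegral_smul_measure,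
    lintegral_add_left_eq_self]
  have hd : Module.finrank ℝ (Euc N) = N := by simp
  rw [hd, abs_of_pos (by positivity), smul_eq_mul, ← mul_assoc, ← ENNReal.ofReal_mul (by positivity),
    mul_inv_cancel₀ (by positivity), ENNReal.ofReal_one, one_mul]

/-- Smallness of the integral of the profile over sparse sets. -/
lemma GG_small {N : ℕ} (hN : 2 ≤ N) {s : ℝ} (hs : s ∈ Set.Ioo (0 : ℝ) 1) {ε : ℝ≥0∞}
    (hε : ε ≠ 0) : ∃ δ : ℝ≥0∞, 0 < δ ∧ ∃ l : ℕ, ∀ T : Set (Euc N), MeasurableSet T →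
      volume (T ∩ Metric.ball 0 l) < δ → ∫⁻ w in T, ENNReal.ofReal (GG N s ‖w‖) ≤ ε := by
  have hfin : ∫⁻ w : Euc N, ENNReal.ofReal (GG N s ‖w‖) ≠ ⊤ :=
    (integrable_GG hN hs).lintegral_lt_top.ne
  have hε2 : ε / 2 ≠ 0 := (ENNReal.half_pos hε).ne'
  obtain ⟨δ, hδ, hδb⟩ := exists_pos_setLIntegral_lt_of_measure_lt hfin hε2
  have hmeas : Measurable (fun w : Euc N => ENNReal.ofReal (GG N s ‖w‖)) :=
    ((measurable_GG N s).comp measurable_norm).ennreal_ofReal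
  have htail : Tendsto ((volume.withDensity (fun w : Euc N => ENNReal.ofReal (GG N s ‖w‖))) ∘
      (fun n : ℕ => (Metric.ball (0 : Euc N) n)ᶜ)) atTop (𝓝 0) := by
    have := tendsto_measure_iInter_atTop
      (μ := volume.withDensity (fun w : Euc N => ENNReal.ofReal (GG N s ‖w‖)))
      (s := fun n : ℕ => (Metric.ball (0 : Euc N) n)ᶜ)
      (fun n => Metric.isOpen_ball.measurableSet.compl.nullMeasurableSet)
      (fun a b hab => compl_subset_compl.2 (Metric.ball_subset_ball (by exact_mod_cast hab)))
      ⟨0, by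
        rw [withDensity_apply _ Metric.isOpen_ball.measurableSet.compl]
        exact ((setLIntegral_le_lintegral _ _).trans_lt hfin.lt_top).ne⟩
    have he : ⋂ n : ℕ, (Metric.ball (0 : Euc N) n)ᶜ = ∅ := by
      rw [← compl_iUnion, Metric.iUnion_ball_nat, compl_univ]
    rwa [he, measure_empty] at this
  obtain ⟨l, hl⟩ := ((tendsto_order.1 htail).2 (ε / 2) (ENNReal.half_pos hε)).exists
  refine ⟨δ, hδ, l, fun T hT hTδ => ?_⟩
  simp only [Function.comp_apply] at hl
  rw [withDensity_apply _ Metric.isOpen_ball.measurableSet.compl] at hl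
  rw [← lintegral_inter_add_sdiff _ T (Metric.isOpen_ball.measurableSet :
    MeasurableSet (Metric.ball (0 : Euc N) l)), ← ENNReal.add_halves ε]
  refine add_le_add (hδb _ hTδ).le (le_trans ?_ hl.le)
  exact lintegral_mono_set (fun w hw => hw.2)

/-- Lipschitz cutoff. -/
def cut {N : ℕ} (x : Euc N) (r : ℝ) (y : Euc N) : ℝ := max 0 (min 1 (2 - 2 * dist y x / r))

lemma measurable_cut {N : ℕ} (x : Euc N) (r : ℝ) : Measurable (cut x r) := by
  unfold cut
  have : Continuous fun y : Euc N => max 0 (min 1 (2 - 2 * dist y x / r)) := by fun_prop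
  exact this.measurable

lemma cut_nonneg {N : ℕ} (x : Euc N) (r : ℝ) (y : Euc N) : 0 ≤ cut x r y := le_max_left _ _

lemma cut_le_one {N : ℕ} (x : Euc N) (r : ℝ) (y : Euc N) : cut x r y ≤ 1 :=
  max_le zero_le_one (min_le_left _ _)

lemma cut_eq_one {N : ℕ} {x : Euc N} {r : ℝ} (hr : 0 < r) {y : Euc N}
    (hy : y ∈ Metric.ball x (r / 2)) : cut x r y = 1 := by
  rw [Metric.mem_ball] at hy
  have : 2 * dist y x / r ≤ 1 := by rw [div_le_one hr]; linarith
  unfold cut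
  rw [min_eq_left (by linarith), max_eq_right zero_le_one]

lemma cut_eq_zero {N : ℕ} {x : Euc N} {r : ℝ} (hr : 0 < r) {y : Euc N}
    (hy : y ∉ Metric.ball x r) : cut x r y = 0 := by
  rw [Metric.mem_ball, not_lt] at hy
  have : 2 ≤ 2 * dist y x / r := by rw [le_div_iff₀ hr]; linarith
  unfold cut
  rw [max_eq_left ((min_le_right _ _).trans (by linarith))]

lemma cut_sub_le {N : ℕ} {x : Euc N} {r : ℝ} (hr : 0 < r) (y z : Euc N) :
    (cut x r y - cut x r z) ^ 2 ≤ min 1 (4 * (‖y - z‖ / r) ^ 2) := by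
  have hmin : ∀ a b : ℝ, |min a 1 - min b 1| ≤ |a - b| := by
    intro a b
    have := abs_min_sub_min_le_max a 1 b 1
    simpa using this
  refine le_min ?_ ?_
  · nlinarith [cut_nonneg x r y, cut_nonneg x r z, cut_le_one x r y, cut_le_one x r z]
  · have h1 : |cut x r y - cut x r z| ≤ 2 * (‖y - z‖ / r) := by
      unfold cut
      rw [max_comm 0, max_comm 0, min_comm 1, min_comm 1]
      refine ((abs_max_sub_max_le_abs _ _ _).trans (hmin _ _)).trans ?_
      have e : (2 - 2 * dist y x / r) - (2 - 2 * dist z x / r)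
        = (dist z x - dist y x) * (2 / r) := by ring
      rw [e, abs_mul, abs_of_pos (by positivity : 0 < 2 / r)]
      have h3 : |dist z x - dist y x| ≤ ‖y - z‖ := by
        rw [norm_sub_rev, ← dist_eq_norm]; exact abs_dist_sub_le z y x
      calc |dist z x - dist y x| * (2 / r) ≤ ‖y - z‖ * (2 / r) := by gcongr
        _ = _ := by ring
    rw [← sq_abs]
    calc |cut x r y - cut x r z| ^ 2 ≤ (2 * (‖y - z‖ / r)) ^ 2 := by gcongr
      _ = _ := by ring

/-- Rescaled majorant kernel. -/
def HH (N : ℕ) (s r : ℝ) (v : Euc N) : ℝ≥0∞ :=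
  ENNReal.ofReal (r ^ (-((N : ℝ) + 2 * s))) * ENNReal.ofReal (GG N s ‖r⁻¹ • v‖)

lemma measurable_HH (N : ℕ) (s r : ℝ) : Measurable (HH N s r) := by
  unfold HH
  exact (((measurable_GG N s).comp
    ((measurable_const_smul (r⁻¹)).norm)).ennreal_ofReal).const_mul _

lemma cut_kern_le {N : ℕ} {s : ℝ} {x : Euc N} {r : ℝ} (hr : 0 < r) (y z : Euc N) :
    ENNReal.ofReal ((cut x r y - cut x r z) ^ 2 / kern N s y z)
      ≤ (Metric.ball x r).indicator (fun _ => HH N s r (y - z)) y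
        + (Metric.ball x r).indicator (fun _ => HH N s r (y - z)) z := by
  by_cases h : y ∈ Metric.ball x r ∨ z ∈ Metric.ball x r
  · have h1 : ENNReal.ofReal ((cut x r y - cut x r z) ^ 2 / kern N s y z) ≤ HH N s r (y - z) := by
      unfold HH
      rw [← ENNReal.ofReal_mul (by positivity)]
      apply ENNReal.ofReal_le_ofReal
      rw [norm_smul, norm_inv, Real.norm_of_nonneg hr.le, inv_mul_eq_div]
      unfold GG kern
      rw [Real.div_rpow (norm_nonneg _) hr.le, Real.rpow_neg hr.le]
      have e : (r ^ ((N : ℝ) + 2 * s))⁻¹ * (min 1 (4 * (‖y - z‖ / r) ^ 2) /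
        (‖y - z‖ ^ ((N : ℝ) + 2 * s) / r ^ ((N : ℝ) + 2 * s)))
        = min 1 (4 * (‖y - z‖ / r) ^ 2) / ‖y - z‖ ^ ((N : ℝ) + 2 * s) := by
        have : r ^ ((N : ℝ) + 2 * s) ≠ 0 := (Real.rpow_pos_of_pos hr _).ne'
        field_simp
      rw [e]
      gcongr
      exact cut_sub_le hr y z
    rcases h with h | h
    · rw [indicator_of_mem h]; exact h1.trans le_self_add
    · rw [indicator_of_mem h (f := fun _ => HH N s r (y - z))]; exact h1.trans le_add_self
  · push Not at h
    rw [cut_eq_zero hr h.1, cut_eq_zero hr h.2]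
    simp

lemma HH_neg (N : ℕ) (s r : ℝ) (v : Euc N) : HH N s r (-v) = HH N s r v := by
  unfold HH; rw [smul_neg, norm_neg]

lemma semiSqOn_cut_le {N : ℕ} {s : ℝ} {Ω : Set (Euc N)} {x : Euc N} {r : ℝ}
    (hr : 0 < r) {K : ℝ≥0∞}
    (hK : ∀ y ∈ Metric.ball x r, ∫⁻ z in Ω, HH N s r (y - z) ≤ K) :
    semiSqOn N s Ω (cut x r) ≤ 2 * K * volume (Ω ∩ Metric.ball x r) := by
  have hbm : MeasurableSet (Metric.ball x r) := Metric.isOpen_ball.measurableSet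
  have hm : Measurable (fun q : Euc N × Euc N => HH N s r (q.1 - q.2)) :=
    (measurable_HH N s r).comp (measurable_fst.sub measurable_snd)
  have hm1 : Measurable (fun q : Euc N × Euc N =>
      (Metric.ball x r).indicator (fun _ => HH N s r (q.1 - q.2)) q.1) :=
    hm.indicator (measurable_fst hbm)
  have hm2 : Measurable (fun q : Euc N × Euc N =>
      (Metric.ball x r).indicator (fun _ => HH N s r (q.1 - q.2)) q.2) :=
    hm.indicator (measurable_snd hbm)
  have hone : ∫⁻ y in Ω, ∫⁻ z in Ω, (Metric.ball x r).indicator (fun _ => HH N s r (y - z)) y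
      ≤ K * volume (Ω ∩ Metric.ball x r) := by
    calc _ ≤ ∫⁻ y in Ω, (Metric.ball x r).indicator (fun _ => K) y := by
          refine lintegral_mono fun y => ?_
          by_cases hy : y ∈ Metric.ball x r
          · simp only [indicator_of_mem hy]; exact hK y hy
          · simp [indicator_of_notMem hy]
      _ = K * volume (Ω ∩ Metric.ball x r) := by
          rw [lintegral_indicator_const hbm, Measure.restrict_apply hbm, inter_comm]
  unfold semiSqOn
  rw [Measure.volume_eq_prod, ← Measure.prod_restrict]
  calc _ ≤ ∫⁻ q, (Metric.ball x r).indicator (fun _ => HH N s r (q.1 - q.2)) q.1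
        + (Metric.ball x r).indicator (fun _ => HH N s r (q.1 - q.2)) q.2
          ∂((volume.restrict Ω).prod (volume.restrict Ω)) :=
        lintegral_mono fun q => cut_kern_le hr q.1 q.2
    _ ≤ K * volume (Ω ∩ Metric.ball x r) + K * volume (Ω ∩ Metric.ball x r) := by
        rw [lintegral_add_left hm1, lintegral_prod _ hm1.aemeasurable,
          lintegral_prod_symm _ hm2.aemeasurable]
        refine add_le_add hone (le_trans (le_of_eq ?_) hone)
        refine lintegral_congr fun y => lintegral_congr fun z => ?_
        simp only
        rw [← neg_sub z y, HH_neg]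
    _ = _ := by ring

lemma HH_integral_le {N : ℕ} {s : ℝ} {Ω : Set (Euc N)} (hopen : IsOpen Ω) {r : ℝ}
    (hr : 0 < r) (y : Euc N) {δ ε : ℝ≥0∞} {l : ℕ}
    (hT : ∀ T : Set (Euc N), MeasurableSet T →
      volume (T ∩ Metric.ball 0 l) < δ → ∫⁻ w in T, ENNReal.ofReal (GG N s ‖w‖) ≤ ε)
    (hy : volume (Ω ∩ Metric.ball y (l * r)) < ENNReal.ofReal (r ^ N) * δ) :
    ∫⁻ z in Ω, HH N s r (y - z) ≤ ENNReal.ofReal (r ^ (-(2 * s))) * ε := by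
  have hΩ := hopen.measurableSet
  have hTm : MeasurableSet ((fun w : Euc N => y + r • w) ⁻¹' Ω) :=
    (measurable_const_smul r).const_add y hΩ
  have hrN : ENNReal.ofReal (r ^ N) ≠ 0 := by simp; positivity
  have h1 : volume (((fun w : Euc N => y + r • w) ⁻¹' Ω) ∩ Metric.ball 0 l) < δ := by
    have hset : MeasurableSet (Ω ∩ Metric.ball y (l * r)) :=
      hΩ.inter Metric.isOpen_ball.measurableSet
    have e := scale_lintegral ((Ω ∩ Metric.ball y (l * r)).indicator 1)
      (measurable_one.indicator hset) y hr
    rw [lintegral_indicator_one hset] at e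
    have e2 : (fun w : Euc N => (Ω ∩ Metric.ball y (l * r)).indicator (1 : Euc N → ℝ≥0∞) (y + r • w))
        = (((fun w : Euc N => y + r • w) ⁻¹' Ω) ∩ Metric.ball 0 l).indicator 1 := by
      ext w
      have : y + r • w ∈ Ω ∩ Metric.ball y (l * r) ↔
          w ∈ ((fun w : Euc N => y + r • w) ⁻¹' Ω) ∩ Metric.ball 0 l := by
        simp only [mem_inter_iff, mem_preimage, Metric.mem_ball, dist_self_add_left, norm_smul,
          dist_zero_right, Real.norm_of_nonneg hr.le]
        rw [mul_comm, mul_lt_mul_iff_left₀ hr]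
      by_cases hw : y + r • w ∈ Ω ∩ Metric.ball y (l * r)
      · rw [indicator_of_mem hw, indicator_of_mem (this.1 hw)]; rfl
      · rw [indicator_of_notMem hw, indicator_of_notMem (fun h => hw (this.2 h))]
    rw [e2, lintegral_indicator_one (hTm.inter Metric.isOpen_ball.measurableSet)] at e
    rw [e] at hy
    exact (ENNReal.mul_lt_mul_iff_right hrN ENNReal.ofReal_ne_top).1 hy
  have h2 := hT _ hTm h1
  have hmI : Measurable (Ω.indicator (fun z => HH N s r (y - z))) :=
    Measurable.indicator ((measurable_HH N s r).comp (measurable_const_sub y)) hΩ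
  rw [← lintegral_indicator hΩ, scale_lintegral _ hmI y hr]
  have e3 : (fun w : Euc N => Ω.indicator (fun z => HH N s r (y - z)) (y + r • w))
      = ((fun w : Euc N => y + r • w) ⁻¹' Ω).indicator
        (fun w => ENNReal.ofReal (r ^ (-((N : ℝ) + 2 * s))) * ENNReal.ofReal (GG N s ‖w‖)) := by
    ext w
    by_cases hw : y + r • w ∈ Ω
    · rw [indicator_of_mem hw, indicator_of_mem (show w ∈ (fun w : Euc N => y + r • w) ⁻¹' Ω from hw)]
      unfold HH
      rw [sub_add_cancel_left, smul_neg, norm_neg, smul_smul, inv_mul_cancel₀ hr.ne', one_smul]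
    · rw [indicator_of_notMem hw, indicator_of_notMem (show w ∉ (fun w : Euc N => y + r • w) ⁻¹' Ω from hw)]
  rw [e3, lintegral_indicator hTm, lintegral_const_mul' _ _ ENNReal.ofReal_ne_top, ← mul_assoc,
    ← ENNReal.ofReal_mul (by positivity), ← Real.rpow_natCast, ← Real.rpow_add hr]
  have e4 : (N : ℝ) + -((N : ℝ) + 2 * s) = -(2 * s) := by ring
  rw [e4]
  gcongr

lemma l2sq_cut_le {N : ℕ} {Ω : Set (Euc N)} {x : Euc N} {r : ℝ} (hr : 0 < r) :
    l2sq N Ω (cut x r) ≤ volume (Ω ∩ Metric.ball x r) := by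
  have hbm : MeasurableSet (Metric.ball x r) := Metric.isOpen_ball.measurableSet
  unfold l2sq
  calc _ ≤ ∫⁻ y in Ω, (Metric.ball x r).indicator 1 y := by
        refine lintegral_mono fun y => ?_
        by_cases hy : y ∈ Metric.ball x r
        · rw [indicator_of_mem hy]
          refine ENNReal.ofReal_le_one.2 ?_
          nlinarith [cut_nonneg x r y, cut_le_one x r y]
        · rw [cut_eq_zero hr hy]; simp
    _ = _ := by rw [lintegral_indicator_one hbm, Measure.restrict_apply hbm, inter_comm]

/-- Upper bound for the norm of the cutoff on sparse sets. -/
lemma cut_upper {N : ℕ} (hN : 2 ≤ N) {s : ℝ} (hs : s ∈ Set.Ioo (0 : ℝ) 1) {Ω : Set (Euc N)}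
    (hopen : IsOpen Ω) {ε : ℝ} (hε : 0 < ε) :
    ∃ δ : ℝ, 0 < δ ∧ ∃ l : ℕ, ∃ R : ℝ, 0 < R ∧ ∀ (x : Euc N) (r : ℝ), 0 < r → r ≤ R →
      volume (Ω ∩ Metric.ball x (2 ^ l * r)) < ENNReal.ofReal (δ * (2 ^ l * r) ^ N) →
      l2sq N Ω (cut x r) + semiSqOn N s Ω (cut x r) ≤
        ENNReal.ofReal (ε * r ^ (-(2 * s))) * volume (Ω ∩ Metric.ball x r) := by
  obtain ⟨δ, hδ, l, hl⟩ := GG_small hN hs (ε := ENNReal.ofReal (ε / 4)) (by simp; positivity)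
  have hδ' : ∃ δ' : ℝ, 0 < δ' ∧ ENNReal.ofReal δ' ≤ δ := by
    refine ⟨(min δ 1).toReal, ENNReal.toReal_pos (by simp [hδ.ne']) (by simp), ?_⟩
    rw [ENNReal.ofReal_toReal (by simp)]
    exact min_le_left _ _
  obtain ⟨δ', hdel0, hδ'⟩ := hδ'
  have h2l : ((l : ℝ) + 1) ≤ 2 ^ l := by exact_mod_cast Nat.lt_two_pow_self
  refine ⟨δ' / (2 ^ l) ^ N, by positivity, l, (ε / 2) ^ (1 / (2 * s)), by positivity, ?_⟩
  intro x r hr hrR hsp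
  have e1 : δ' / (2 ^ l) ^ N * (2 ^ l * r) ^ N = r ^ N * δ' := by
    rw [mul_pow]; field_simp
  rw [e1, ENNReal.ofReal_mul (by positivity)] at hsp
  have hK : ∀ y ∈ Metric.ball x r, ∫⁻ z in Ω, HH N s r (y - z) ≤
      ENNReal.ofReal (r ^ (-(2 * s))) * ENNReal.ofReal (ε / 4) := by
    intro y hy
    refine HH_integral_le hopen hr y hl ?_
    refine lt_of_le_of_lt ?_ (hsp.trans_le (by gcongr))
    refine measure_mono (inter_subset_inter_right _ (Metric.ball_subset_ball' ?_))
    rw [Metric.mem_ball] at hy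
    nlinarith
  have h1 := semiSqOn_cut_le hr hK
  have h2 := l2sq_cut_le (Ω := Ω) (x := x) hr
  have hr2 : r ^ (2 * s) ≤ ε / 2 := by
    calc r ^ (2 * s) ≤ ((ε / 2) ^ (1 / (2 * s))) ^ (2 * s) :=
          Real.rpow_le_rpow hr.le hrR (by linarith [hs.1])
      _ = ε / 2 := by
          rw [← Real.rpow_mul (by positivity), one_div_mul_cancel (by linarith [hs.1]),
            Real.rpow_one]
  have h3 : 1 ≤ ε / 2 * r ^ (-(2 * s)) := by
    rw [Real.rpow_neg hr.le, ← div_eq_mul_inv, le_div_iff₀ (by positivity)]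
    linarith
  calc _ ≤ ENNReal.ofReal (ε / 2 * r ^ (-(2 * s))) * volume (Ω ∩ Metric.ball x r) +
        ENNReal.ofReal (ε / 2 * r ^ (-(2 * s))) * volume (Ω ∩ Metric.ball x r) := by
        refine add_le_add (h2.trans ?_) (h1.trans (le_of_eq ?_))
        · calc _ = 1 * volume (Ω ∩ Metric.ball x r) := (one_mul _).symm
            _ ≤ _ := by gcongr; exact ENNReal.one_le_ofReal.2 h3
        · congr 1
          rw [← ENNReal.ofReal_mul (by positivity), ← ENNReal.ofReal_ofNat 2,
            ← ENNReal.ofReal_mul (by positivity)]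
          congr 1; ring
    _ = _ := by
        rw [← add_mul, ← ENNReal.ofReal_add (by positivity) (by positivity)]
        congr 2; ring

/-- Lower bound on the energy from two separated level sets. -/
lemma energy_lower {N : ℕ} {s : ℝ} (hs : 0 < s) {Ω : Set (Euc N)} {U : Euc N → ℝ}
    {x : Euc N} {r : ℝ} {S T : Set (Euc N)} (hS : MeasurableSet S)
    (hT : MeasurableSet T) (hSΩ : S ⊆ Ω) (hSb : S ⊆ Metric.ball x (2 * r))
    (hTb : T ⊆ Metric.ball x (2 * r)) {a : ℝ} (ha : ∀ᵐ y ∂(volume.restrict S), U y = a)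
    (hTa : ∀ z ∈ T, 1 / 4 ≤ (a - U z) ^ 2) :
    ENNReal.ofReal (1 / 4 / (4 * r) ^ ((N : ℝ) + 2 * s)) * (volume S * volume T)
      ≤ semiSq N s Ω U := by
  have : Nonempty (Euc N) := ⟨x⟩
  have hsub : S ×ˢ T ⊆ reg N Ω := fun q hq => Or.inl (subset_closure (hSΩ hq.1))
  unfold semiSq
  refine le_trans ?_ (lintegral_mono_set hsub)
  rw [← Measure.prod_prod, ← Measure.volume_eq_prod, ← setLIntegral_const]
  rw [ae_restrict_iff' hS] at ha
  have hz : ∀ᵐ q : Euc N × Euc N, q.1 ∈ S → U q.1 = a :=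
    (proj_ae ha).mono fun q hq => hq.1
  refine setLIntegral_mono_ae' (hS.prod hT) ?_
  have hdiag : ∀ y z : Euc N, y ∈ S → z ∈ T → ‖y - z‖ ≤ 4 * r := by
    intro y z hy hz
    have h1 := hSb hy
    have h2 := hTb hz
    rw [Metric.mem_ball] at h1 h2
    rw [← dist_eq_norm]
    linarith [dist_triangle_right y z x]
  filter_upwards [hz] with q hq hqm
  apply ENNReal.ofReal_le_ofReal
  rw [hq hqm.1]
  have h4 := hTa _ hqm.2
  have hne : q.1 = q.2 → False := by
    intro h
    rw [← h, hq hqm.1] at h4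
    norm_num at h4
  have hk := kern_pos (s := s) (show q.1 ≠ q.2 from hne)
  have hk2 : kern N s q.1 q.2 ≤ (4 * r) ^ ((N : ℝ) + 2 * s) :=
    Real.rpow_le_rpow (norm_nonneg _) (hdiag _ _ hqm.1 hqm.2) (by positivity)
  exact div_le_div₀ (by positivity) h4 hk hk2

/-- Measure of `Ω` in a ball. -/
def mm {N : ℕ} (Ω : Set (Euc N)) (x : Euc N) (r : ℝ) : ℝ :=
  (volume (Ω ∩ Metric.ball x r)).toReal

lemma vol_inter_ball_ne_top {N : ℕ} (Ω : Set (Euc N)) (x : Euc N) (r : ℝ) :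
    volume (Ω ∩ Metric.ball x r) ≠ ⊤ :=
  ((measure_mono inter_subset_right).trans_lt measure_ball_lt_top).ne

lemma mm_nonneg {N : ℕ} (Ω : Set (Euc N)) (x : Euc N) (r : ℝ) : 0 ≤ mm Ω x r :=
  ENNReal.toReal_nonneg

lemma mm_mono {N : ℕ} (Ω : Set (Euc N)) {x y : Euc N} {r t : ℝ} (h : r + dist x y ≤ t) :
    mm Ω x r ≤ mm Ω y t :=
  ENNReal.toReal_mono (vol_inter_ball_ne_top _ _ _)
    (measure_mono (inter_subset_inter_right _ (Metric.ball_subset_ball' h)))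

/-- Volume of the unit ball. -/
def om (N : ℕ) : ℝ := (volume (Metric.ball (0 : Euc N) 1)).toReal

lemma om_pos (N : ℕ) : 0 < om N :=
  ENNReal.toReal_pos (Metric.measure_ball_pos _ _ one_pos).ne' measure_ball_lt_top.ne

lemma ball_toReal {N : ℕ} (hN : 2 ≤ N) (x : Euc N) {r : ℝ} (hr : 0 ≤ r) :
    (volume (Metric.ball x r)).toReal = r ^ N * om N := by
  have := nontriv hN
  rw [Measure.addHaar_ball volume x hr, ENNReal.toReal_mul, ENNReal.toReal_ofReal (by positivity)]
  simp [om]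

lemma energy_real {N : ℕ} {s : ℝ} (hs : 0 < s) {Ω : Set (Euc N)} {U : Euc N → ℝ}
    {x : Euc N} {r : ℝ} (hr : 0 < r) {S T : Set (Euc N)} (hS : MeasurableSet S)
    (hT : MeasurableSet T) (hSΩ : S ⊆ Ω) (hSb : S ⊆ Metric.ball x (2 * r))
    (hTb : T ⊆ Metric.ball x (2 * r)) {a : ℝ} (ha : ∀ᵐ y ∂(volume.restrict S), U y = a)
    (hTa : ∀ z ∈ T, 1 / 4 ≤ (a - U z) ^ 2) {B : ℝ} (hB : 0 ≤ B)
    (hle : semiSq N s Ω U ≤ ENNReal.ofReal B) :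
    1 / 4 / (4 * r) ^ ((N : ℝ) + 2 * s) * ((volume S).toReal * (volume T).toReal) ≤ B := by
  have h := (energy_lower (s := s) hs hS hT hSΩ hSb hTb ha hTa).trans hle
  have h2 := ENNReal.toReal_mono ENNReal.ofReal_ne_top h
  rwa [ENNReal.toReal_ofReal hB, ENNReal.toReal_mul, ENNReal.toReal_mul,
    ENNReal.toReal_ofReal (by positivity)] at h2

lemma core {N : ℕ} (hN : 2 ≤ N) {s : ℝ} (hs : s ∈ Set.Ioo (0 : ℝ) 1) {Ω : Set (Euc N)}
    (hopen : IsOpen Ω) {C : ℝ} (hC : 0 < C)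
    (hCb : ∀ u : Euc N → ℝ, memHsOn N s Ω u →
      ∃ U : Euc N → ℝ, Measurable U ∧ U =ᵐ[volume.restrict Ω] u ∧
        semiSq N s Ω U ≤ ENNReal.ofReal C * (l2sq N Ω u + semiSqOn N s Ω u)) :
    ∃ η : ℝ, 0 < η ∧ ∃ l : ℕ, ∃ R : ℝ, 0 < R ∧ ∀ (x : Euc N) (r : ℝ), 0 < r → r ≤ R →
      mm Ω x (2 ^ l * r) < η * (2 ^ l * r) ^ N → 2 * mm Ω x r ≤ mm Ω x (2 * r) →
      mm Ω x r ≤ 2 ^ N * mm Ω x (r / 2) → mm Ω x r = 0 := by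
  have hω := om_pos N
  obtain ⟨k, hk⟩ : ∃ k : ℝ, k = om N / (8 * 4 ^ ((N : ℝ) + 2 * s) * 2 ^ N) := ⟨_, rfl⟩
  have hk0 : 0 < k := by rw [hk]; positivity
  obtain ⟨δ, hδ, l, R, hR, hup⟩ := cut_upper hN hs hopen (ε := k / (2 * C)) (by positivity)
  refine ⟨δ, hδ, l, R, hR, fun x r hr hrR h1 h2 h3 => ?_⟩
  have hΩ := hopen.measurableSet
  have hup' := hup x r hr hrR (by
    rwa [ENNReal.lt_ofReal_iff_toReal_lt (vol_inter_ball_ne_top _ _ _)])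
  have hfin : l2sq N Ω (cut x r) + semiSqOn N s Ω (cut x r) < ⊤ :=
    hup'.trans_lt (ENNReal.mul_lt_top ENNReal.ofReal_lt_top (vol_inter_ball_ne_top _ _ _).lt_top)
  rw [ENNReal.add_lt_top] at hfin
  obtain ⟨U, hU, hUu, hUe⟩ := hCb (cut x r) ⟨measurable_cut x r, hfin.1, hfin.2⟩
  have hle : semiSq N s Ω U ≤ ENNReal.ofReal (k / 2 * r ^ (-(2 * s)) * mm Ω x r) := by
    refine hUe.trans ((mul_le_mul_right hup' _).trans (le_of_eq ?_))
    rw [← ENNReal.ofReal_toReal (vol_inter_ball_ne_top Ω x r),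
      ← ENNReal.ofReal_mul (by positivity), ← ENNReal.ofReal_mul (by positivity)]
    congr 1
    unfold mm
    field_simp
  have hm0 := mm_nonneg Ω x r
  have hB : 0 ≤ k / 2 * r ^ (-(2 * s)) * mm Ω x r := by positivity
  by_contra hne
  have hmpos : 0 < mm Ω x r := lt_of_le_of_ne hm0 (Ne.symm hne)
  -- final contradiction
  have fin : ∀ σ τ : ℝ, mm Ω x r / 2 ^ N ≤ σ → r ^ N * om N / 2 ≤ τ →
      1 / 4 / (4 * r) ^ ((N : ℝ) + 2 * s) * (σ * τ) ≤ k / 2 * r ^ (-(2 * s)) * mm Ω x r →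
      False := by
    intro σ τ hσ hτ h
    have h5 : 1 / 4 / (4 * r) ^ ((N : ℝ) + 2 * s) * (mm Ω x r / 2 ^ N * (r ^ N * om N / 2))
        ≤ k / 2 * r ^ (-(2 * s)) * mm Ω x r := by
      refine le_trans ?_ h
      have : 0 ≤ σ := le_trans (by positivity) hσ
      gcongr
    have h6 : 1 / 4 / (4 * r) ^ ((N : ℝ) + 2 * s) * (mm Ω x r / 2 ^ N * (r ^ N * om N / 2))
        = k * r ^ (-(2 * s)) * mm Ω x r := by
      rw [hk, Real.mul_rpow (by norm_num) hr.le, Real.rpow_add hr, Real.rpow_natCast,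
        Real.rpow_neg hr.le]
      have : r ^ (2 * s) ≠ 0 := (Real.rpow_pos_of_pos hr _).ne'
      have : (4 : ℝ) ^ ((N : ℝ) + 2 * s) ≠ 0 := (Real.rpow_pos_of_pos (by norm_num) _).ne'
      field_simp
      norm_num
    rw [h6] at h5
    have : 0 < k * r ^ (-(2 * s)) * mm Ω x r := by positivity
    nlinarith
  have hUm : ∀ S : Set (Euc N), MeasurableSet S → S ⊆ Ω → ∀ a, (∀ y ∈ S, cut x r y = a) →
      ∀ᵐ y ∂(volume.restrict S), U y = a := by
    intro S hS hSΩ a ha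
    have h6 := ae_restrict_of_ae_restrict_of_subset hSΩ hUu
    filter_upwards [h6, ae_restrict_mem hS] with y hy hyS
    rw [hy, ha y hyS]
  have hbr : Metric.ball x r ⊆ Metric.ball x (2 * r) := Metric.ball_subset_ball (by linarith)
  have hPm : MeasurableSet (Metric.ball x r ∩ {z | U z ≤ 1 / 2}) :=
    Metric.isOpen_ball.measurableSet.inter (measurableSet_le hU measurable_const)
  have hQm : MeasurableSet (Metric.ball x r \ {z | U z ≤ 1 / 2}) :=
    Metric.isOpen_ball.measurableSet.diff (measurableSet_le hU measurable_const)
  have hsum : (volume (Metric.ball x r ∩ {z | U z ≤ 1 / 2})).toReal +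
      (volume (Metric.ball x r \ {z | U z ≤ 1 / 2})).toReal = r ^ N * om N := by
    rw [← ball_toReal hN x hr.le, ← ENNReal.toReal_add, measure_inter_add_sdiff _
      (measurableSet_le hU measurable_const)]
    · exact ((measure_mono inter_subset_left).trans_lt measure_ball_lt_top).ne
    · exact ((measure_mono sdiff_subset).trans_lt measure_ball_lt_top).ne
  rcases le_total (r ^ N * om N / 2) (volume (Metric.ball x r ∩ {z | U z ≤ 1 / 2})).toReal
    with hP | hP
  · -- half of the ball has small `U`
    have hAm : MeasurableSet (Ω ∩ Metric.ball x (r / 2)) :=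
      hΩ.inter Metric.isOpen_ball.measurableSet
    have := energy_real (a := 1) hs.1 hr hAm hPm inter_subset_left
      (inter_subset_right.trans (Metric.ball_subset_ball (by linarith)))
      (inter_subset_left.trans hbr)
      (hUm _ hAm inter_subset_left 1 (fun y hy => cut_eq_one hr hy.2))
      (fun z hz => by have := hz.2; simp only [mem_ofPred_eq] at this; nlinarith) hB hle
    refine fin _ _ ?_ hP this
    rw [div_le_iff₀ (by positivity), mul_comm]; exact h3
  · have hQ : r ^ N * om N / 2 ≤ (volume (Metric.ball x r \ {z | U z ≤ 1 / 2})).toReal := by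
      linarith
    have hDm : MeasurableSet ((Ω ∩ Metric.ball x (2 * r)) \ (Ω ∩ Metric.ball x r)) :=
      (hΩ.inter Metric.isOpen_ball.measurableSet).diff
        (hΩ.inter Metric.isOpen_ball.measurableSet)
    have := energy_real (a := 0) hs.1 hr hDm hQm (sdiff_subset.trans inter_subset_left)
      (sdiff_subset.trans inter_subset_right)
      (sdiff_subset.trans hbr)
      (hUm _ hDm (sdiff_subset.trans inter_subset_left) 0
        (fun y hy => cut_eq_zero hr (fun h => hy.2 ⟨hy.1.1, h⟩)))
      (fun z hz => by have := hz.2; simp only [mem_ofPred_eq, not_le] at this; nlinarith) hB hle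
    refine fin _ _ ?_ hQ this
    rw [measure_sdiff (inter_subset_inter_right _ hbr)
      (hΩ.inter Metric.isOpen_ball.measurableSet).nullMeasurableSet (vol_inter_ball_ne_top _ _ _),
      ENNReal.toReal_sub_of_le (measure_mono (inter_subset_inter_right _ hbr))
      (vol_inter_ball_ne_top _ _ _)]
    have h7 : mm Ω x r / 2 ^ N ≤ mm Ω x r := div_le_self hm0 (one_le_pow₀ (by norm_num))
    unfold mm at *
    linarith

lemma seq_lemma {a : ℕ → ℝ} {q e : ℝ} {l K n0 : ℕ} (hq : 4 ≤ q) (ha : ∀ n, 0 < a n)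
    (h1 : ∀ n ≤ K, a n * q ^ n < e)
    (hcore : ∀ n, l ≤ n → 1 ≤ n → a (n - l) * q ^ (n - l) < e → 2 * a n ≤ a (n - 1) →
      a n ≤ q * a (n + 1) → False)
    (hl : l ≤ n0) (hn0 : 1 ≤ n0) (hK : n0 ≤ K) (h2 : 2 * a n0 ≤ a (n0 - 1)) :
    ∀ n, a n * q ^ n < e := by
  have key : ∀ n, n0 ≤ n → (∀ i ≤ n, a i * q ^ i < e) ∧ 2 * a n ≤ a (n - 1) := by
    intro n hn
    induction n, hn using Nat.le_induction with
    | base => exact ⟨fun i hi => h1 i (hi.trans hK), h2⟩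
    | succ n hn ih =>
      have h3 : q * a (n + 1) < a n := by
        by_contra h
        exact hcore n (hl.trans hn) (hn0.trans hn) (ih.1 _ (Nat.sub_le _ _)) ih.2 (not_lt.1 h)
      constructor
      · intro i hi
        rcases Nat.lt_or_ge i (n + 1) with h | h
        · exact ih.1 i (by omega)
        · obtain rfl : i = n + 1 := le_antisymm hi h
          have h4 := ih.1 n le_rfl
          have : 0 < q ^ n := by positivity
          rw [pow_succ]
          nlinarith
      · simp only [Nat.add_sub_cancel]
        nlinarith [ha (n + 1)]
  intro n
  exact (key (max n n0) (le_max_right _ _)).1 n (le_max_left _ _)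

lemma exists_drop {a : ℕ → ℝ} {l K : ℕ} (hlK : l ≤ K) (h : 2 ^ K * a K < a l)
    (ha : ∀ n, 0 < a n) :
    ∃ n0, l ≤ n0 ∧ 1 ≤ n0 ∧ n0 ≤ K ∧ 2 * a n0 ≤ a (n0 - 1) := by
  by_contra hcon
  push Not at hcon
  have key : ∀ n, l ≤ n → n ≤ K → a l * 2 ^ l ≤ 2 ^ n * a n := by
    intro n hn
    induction n, hn using Nat.le_induction with
    | base => intro _; linarith
    | succ n hn ih =>
      intro hnK
      have h1 := ih (by omega)
      have h2 := hcon (n + 1) (by omega) (by omega) hnK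
      simp only [Nat.add_sub_cancel] at h2
      rw [pow_succ]
      have : (0 : ℝ) < 2 ^ n := by positivity
      nlinarith
  have h3 := key K hlK le_rfl
  have : (1 : ℝ) ≤ 2 ^ l := one_le_pow₀ (by norm_num)
  nlinarith [ha l]

lemma density_sparse {N : ℕ} (hN : 2 ≤ N) {Ω : Set (Euc N)} (hopen : IsOpen Ω)
    (hF : volume (frontier Ω) ≠ 0) :
    ∃ x0 ∈ frontier Ω, ∀ κ : ℝ, 0 < κ → ∃ R : ℝ, 0 < R ∧ ∀ r, 0 < r → r ≤ R →
      mm Ω x0 r < κ * r ^ N := by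
  have := nontriv hN
  have h0 := Besicovitch.ae_tendsto_measure_inter_div (volume : Measure (Euc N)) (frontier Ω)
  have hFm : MeasurableSet (frontier Ω) := isClosed_frontier.measurableSet
  have hne : (ae (volume.restrict (frontier Ω))).NeBot := by
    rw [ae_neBot, Ne, Measure.restrict_eq_zero]; exact hF
  obtain ⟨x0, hx0, hx0F⟩ := (h0.and (ae_restrict_mem hFm)).exists
  refine ⟨x0, hx0F, fun κ hκ => ?_⟩
  have hω := om_pos N
  have hlim : (1 : ℝ≥0∞) - ENNReal.ofReal (κ / (2 * om N)) < 1 :=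
    ENNReal.sub_lt_self ENNReal.one_ne_top one_ne_zero (by simp; positivity)
  have h1 := (tendsto_order.1 hx0).1 _ hlim
  rw [eventually_nhdsWithin_iff, Metric.eventually_nhds_iff] at h1
  obtain ⟨R, hR, hRb⟩ := h1
  refine ⟨R / 2, by positivity, fun r hr hrR => ?_⟩
  have h2 := hRb (y := r) (by rw [Real.dist_eq, sub_zero, abs_of_pos hr]; linarith) hr
  have hcb : volume (Metric.closedBall x0 r) ≠ ⊤ := measure_closedBall_lt_top.ne
  have hcb0 : volume (Metric.closedBall x0 r) ≠ 0 := (Metric.measure_closedBall_pos _ _ hr).ne'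
  have hcbr : (volume (Metric.closedBall x0 r)).toReal = r ^ N * om N := by
    rw [Measure.addHaar_closedBall volume x0 hr.le, ENNReal.toReal_mul,
      ENNReal.toReal_ofReal (by positivity)]
    simp [om]
  have hi : volume (frontier Ω ∩ Metric.closedBall x0 r) ≠ ⊤ :=
    ((measure_mono inter_subset_right).trans_lt hcb.lt_top).ne
  have h3 : 1 - κ / (2 * om N) ≤ (volume (frontier Ω ∩ Metric.closedBall x0 r)).toReal /
      (volume (Metric.closedBall x0 r)).toReal := by
    rw [← ENNReal.toReal_div]
    rcases le_total (1 - κ / (2 * om N)) 0 with h | h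
    · exact h.trans ENNReal.toReal_nonneg
    · rw [← ENNReal.ofReal_le_iff_le_toReal (ENNReal.div_lt_top hi hcb0).ne,
        ENNReal.ofReal_sub _ (by positivity), ENNReal.ofReal_one]
      exact h2.le
  have hdisj : Disjoint (Ω ∩ Metric.ball x0 r) (frontier Ω ∩ Metric.closedBall x0 r) := by
    rw [Set.disjoint_left]
    rintro y ⟨hy, -⟩ ⟨hy', -⟩
    rw [hopen.frontier_eq] at hy'
    exact hy'.2 hy
  have h4 : mm Ω x0 r + (volume (frontier Ω ∩ Metric.closedBall x0 r)).toReal ≤ r ^ N * om N := by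
    rw [← hcbr]
    unfold mm
    rw [← ENNReal.toReal_add (vol_inter_ball_ne_top _ _ _) hi, ← measure_union hdisj
      (hFm.inter Metric.isClosed_closedBall.measurableSet)]
    refine ENNReal.toReal_mono hcb (measure_mono (union_subset ?_ inter_subset_right))
    exact inter_subset_right.trans Metric.ball_subset_closedBall
  have hrN : 0 < r ^ N := by positivity
  rw [hcbr, le_div_iff₀ (by positivity)] at h3
  have h5 : (1 - κ / (2 * om N)) * (r ^ N * om N) = r ^ N * om N - κ * r ^ N / 2 := by
    field_simp
  rw [h5] at h3
  have : 0 < κ * r ^ N := by positivity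
  linarith

lemma frontier_null {N : ℕ} (hN : 2 ≤ N) {s : ℝ} (hs : s ∈ Set.Ioo (0 : ℝ) 1) {Ω : Set (Euc N)}
    (hopen : IsOpen Ω) (hne : Ω.Nonempty)
    (hext : ∀ u : Euc N → ℝ, memHsOn N s Ω u →
      ∃ U : Euc N → ℝ, memHs N s Ω U ∧ U =ᵐ[volume.restrict Ω] u) :
    volume (frontier Ω) = 0 := by
  by_contra hF
  obtain ⟨C, hC, hCb⟩ := ext_bound hN hopen hne hext
  obtain ⟨η1, hη1, l, R1, hR1, hcore⟩ := core hN hs hopen hC hCb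
  obtain ⟨x0, hx0, hdens⟩ := density_sparse hN hopen hF
  have hω := om_pos N
  obtain ⟨η, hη, hηω, hηη⟩ : ∃ η : ℝ, 0 < η ∧ η ≤ om N ∧ η ≤ η1 :=
    ⟨min (om N) η1, lt_min hω hη1, min_le_left _ _, min_le_right _ _⟩
  obtain ⟨R2, hR2, hsp⟩ := hdens (η / 2 ^ N) (by positivity)
  obtain ⟨R, hR, hRR1, hRR2⟩ : ∃ R : ℝ, 0 < R ∧ R ≤ R1 ∧ 2 * R ≤ R2 :=
    ⟨min R1 (R2 / 2), by positivity, min_le_left _ _, by linarith [min_le_right R1 (R2 / 2)]⟩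
  have hq : (4 : ℝ) ≤ 2 ^ N := by
    calc (4 : ℝ) = 2 ^ 2 := by norm_num
      _ ≤ 2 ^ N := pow_le_pow_right₀ (by norm_num) hN
  have mpos : ∀ x ∈ closure Ω, ∀ r, 0 < r → 0 < mm Ω x r := by
    intro x hx r hr
    refine ENNReal.toReal_pos ?_ (vol_inter_ball_ne_top _ _ _)
    obtain ⟨y, hy, hy'⟩ := Metric.mem_closure_iff.1 hx r hr
    refine ((hopen.inter Metric.isOpen_ball).measure_pos volume ⟨y, hy, ?_⟩).ne'
    rw [Metric.mem_ball']; exact hy'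
  have hx0c : x0 ∈ closure Ω := frontier_subset_closure hx0
  have hβ : 0 < mm Ω x0 (R / 2 ^ l / 2) := mpos x0 hx0c _ (by positivity)
  obtain ⟨K0, hK0⟩ := exists_pow_lt_of_lt_one
    (show 0 < mm Ω x0 (R / 2 ^ l / 2) / (η * R ^ N) by positivity) (show (1 / 2 : ℝ) < 1 by norm_num)
  obtain ⟨K, hKK0, hKl⟩ : ∃ K, K0 ≤ K ∧ l + 1 ≤ K := ⟨max K0 (l + 1), le_max_left _ _, le_max_right _ _⟩
  have hK : (1 / 2 : ℝ) ^ K * (η * R ^ N) < mm Ω x0 (R / 2 ^ l / 2) := by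
    rw [← lt_div_iff₀ (by positivity)]
    exact (pow_le_pow_of_le_one (by norm_num) (by norm_num) hKK0).trans_lt hK0
  obtain ⟨x, hxΩ, hxd⟩ := Metric.mem_closure_iff.1 hx0c (R / 2 ^ K) (by positivity)
  rw [dist_comm] at hxd
  have hmono : ∀ i j : ℕ, i ≤ j → R / 2 ^ j ≤ R / 2 ^ i := fun i j hij => by
    gcongr; norm_num
  have ha : ∀ n, 0 < mm Ω x (R / 2 ^ n) :=
    fun n => mpos x (subset_closure hxΩ) _ (by positivity)
  have hpow : ∀ n : ℕ, (R / 2 ^ n) ^ N * (2 ^ N) ^ n = R ^ N := by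
    intro n
    rw [div_pow, ← pow_mul, ← pow_mul, mul_comm n N]; field_simp
  have h1 : ∀ n ≤ K, mm Ω x (R / 2 ^ n) * (2 ^ N) ^ n < η * R ^ N := by
    intro n hn
    have h2 : mm Ω x (R / 2 ^ n) ≤ mm Ω x0 (2 * (R / 2 ^ n)) :=
      mm_mono Ω (by linarith [hmono n K hn])
    have h3 := hsp (2 * (R / 2 ^ n)) (by positivity) (by
      have := hmono 0 n (Nat.zero_le _)
      rw [pow_zero, div_one] at this
      linarith)
    have h4 : η / 2 ^ N * (2 * (R / 2 ^ n)) ^ N = η * (R / 2 ^ n) ^ N := by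
      rw [mul_pow]; field_simp
    rw [h4] at h3
    calc _ < η * (R / 2 ^ n) ^ N * (2 ^ N) ^ n := by
          have : (0 : ℝ) < (2 ^ N) ^ n := by positivity
          exact mul_lt_mul_of_pos_right (h2.trans_lt h3) this
      _ = η * R ^ N := by rw [mul_assoc, hpow]
  have hdrop : 2 ^ K * mm Ω x (R / 2 ^ K) < mm Ω x (R / 2 ^ l) := by
    have h2 := h1 K le_rfl
    have h3 : mm Ω x0 (R / 2 ^ l / 2) ≤ mm Ω x (R / 2 ^ l) := by
      refine mm_mono Ω ?_
      have h4 := hmono (l + 1) K hKl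
      have h5 : R / 2 ^ (l + 1) = R / 2 ^ l / 2 := by rw [pow_succ]; field_simp
      rw [dist_comm]
      rw [h5] at h4
      linarith
    refine lt_of_le_of_lt ?_ (hK.trans_le h3)
    have h6 : (4 : ℝ) ^ K ≤ (2 ^ N) ^ K := pow_le_pow_left₀ (by norm_num) hq K
    have h7 : (1 / 2 : ℝ) ^ K * 4 ^ K = 2 ^ K := by rw [← mul_pow]; norm_num
    have h8 : (0 : ℝ) < (1 / 2) ^ K := by positivity
    calc 2 ^ K * mm Ω x (R / 2 ^ K) = (1 / 2) ^ K * (mm Ω x (R / 2 ^ K) * 4 ^ K) := by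
          rw [← h7]; ring
      _ ≤ (1 / 2) ^ K * (mm Ω x (R / 2 ^ K) * (2 ^ N) ^ K) := by
          have := (ha K).le
          gcongr
      _ ≤ _ := by gcongr
  obtain ⟨n0, hn1, hn2, hn3, hn4⟩ :=
    exists_drop (a := fun n => mm Ω x (R / 2 ^ n)) (by omega : l ≤ K) hdrop ha
  have hall := seq_lemma (a := fun n => mm Ω x (R / 2 ^ n)) (q := 2 ^ N) (e := η * R ^ N)
    (l := l) hq ha h1 (by
      intro n hln h1n hA hB hD
      have e1 : 2 ^ l * (R / 2 ^ n) = R / 2 ^ (n - l) := by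
        rw [eq_comm, div_eq_iff (by positivity)]
        have : (2 : ℝ) ^ n = 2 ^ l * 2 ^ (n - l) := by rw [← pow_add]; congr 1; omega
        rw [this]; field_simp
      have e2 : 2 * (R / 2 ^ n) = R / 2 ^ (n - 1) := by
        have : (2 : ℝ) ^ n = 2 ^ (n - 1) * 2 := by rw [← pow_succ]; congr 1; omega
        rw [this]; field_simp
      have e3 : R / 2 ^ n / 2 = R / 2 ^ (n + 1) := by rw [pow_succ]; field_simp
      have := hcore x (R / 2 ^ n) (by positivity) (by
        have := hmono 0 n (Nat.zero_le _)
        rw [pow_zero, div_one] at this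
        linarith) (by
        rw [e1]
        have h2 : (0 : ℝ) < (2 ^ N) ^ (n - l) := by positivity
        refine lt_of_lt_of_le ?_ (mul_le_mul_of_nonneg_right hηη (by positivity))
        rw [← hpow (n - l), ← mul_assoc] at hA
        exact lt_of_mul_lt_mul_right hA h2.le) (by rw [e2]; exact hB) (by rw [e3]; exact hD)
      exact (ha n).ne' this) hn1 hn2 hn3 hn4
  obtain ⟨ρ, hρ, hρb⟩ := Metric.isOpen_iff.1 hopen x hxΩ
  obtain ⟨n, hn⟩ := exists_pow_lt_of_lt_one (show 0 < ρ / R by positivity)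
    (show (1 / 2 : ℝ) < 1 by norm_num)
  have hn' : R / 2 ^ n < ρ := by
    rw [lt_div_iff₀ hR] at hn
    calc R / 2 ^ n = (1 / 2) ^ n * R := by rw [one_div, inv_pow]; field_simp
      _ < ρ := hn
  have hlast := hall n
  have e4 : mm Ω x (R / 2 ^ n) = (R / 2 ^ n) ^ N * om N := by
    unfold mm
    rw [inter_eq_right.2 ((Metric.ball_subset_ball hn'.le).trans hρb),
      ball_toReal hN x (by positivity)]
  simp only [e4] at hlast
  have e5 : (R / 2 ^ n) ^ N * om N * (2 ^ N) ^ n = om N * R ^ N := by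
    rw [mul_right_comm, hpow, mul_comm]
  rw [e5] at hlast
  have := lt_of_mul_lt_mul_right hlast (by positivity)
  linarith

/-- Weighted differences of functions vanishing on `Ω`. -/
def MM (N : ℕ) (s : ℝ) (μ : Measure (Euc N)) (ν : Measure (Euc N × Euc N)) :
    Submodule ℝ (Lp ℝ 2 ν) :=
  (VV N s μ ν).comap (LinearMap.inr ℝ (Lp ℝ 2 μ) (Lp ℝ 2 ν))

lemma MM_closed {N : ℕ} {s : ℝ} {τ μ : Measure (Euc N)} {ν : Measure (Euc N × Euc N)}
    (hA : Adm τ μ ν) : IsClosed (MM N s μ ν : Set (Lp ℝ 2 ν)) :=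
  (VV_closed hA).preimage (f := fun g : Lp ℝ 2 ν => ((0 : Lp ℝ 2 μ), g)) (by fun_prop)

lemma mem_MM {N : ℕ} {s : ℝ} {μ : Measure (Euc N)} {ν : Measure (Euc N × Euc N)}
    {g : Lp ℝ 2 ν} : g ∈ MM N s μ ν ↔
      ∃ U : Euc N → ℝ, Measurable U ∧ U =ᵐ[μ] 0 ∧ g =ᵐ[ν] dd N s U := by
  constructor
  · rintro ⟨U, hU, h1, h2⟩
    exact ⟨U, hU, h1.symm.trans (Lp.coeFn_zero _ _ _), h2⟩
  · rintro ⟨U, hU, h1, h2⟩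
    exact ⟨U, hU, (Lp.coeFn_zero _ _ _).trans h1.symm, h2⟩

lemma exists_proj {N : ℕ} {s : ℝ} {τ μ : Measure (Euc N)} {ν : Measure (Euc N × Euc N)}
    (hA : Adm τ μ ν) {U : Euc N → ℝ} (hU : Measurable U) (hUL : MemLp (dd N s U) 2 ν) :
    ∃ V : Euc N → ℝ, Measurable V ∧ V =ᵐ[μ] U ∧ MemLp (dd N s V) 2 ν ∧
      ∀ ψ : Euc N → ℝ, Measurable ψ → ψ =ᵐ[μ] 0 → MemLp (dd N s ψ) 2 ν →
        ∫ q, dd N s V q * dd N s ψ q ∂ν = 0 := by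
  have : CompleteSpace (MM N s μ ν) := (MM_closed hA).completeSpace_coe
  obtain ⟨p, hp, horth⟩ : ∃ p ∈ MM N s μ ν, ∀ g ∈ MM N s μ ν,
      inner ℝ (hUL.toLp _ - p) g = 0 :=
    ⟨_, Submodule.starProjection_apply_mem _ (hUL.toLp _), fun g hg =>
      Submodule.starProjection_inner_eq_zero _ g hg⟩
  obtain ⟨φ, hφ, hφ0, hφp⟩ := mem_MM.1 hp
  have hφL : MemLp (dd N s φ) 2 ν := (memLp_congr_ae hφp).1 (Lp.memLp p)
  refine ⟨U - φ, hU.sub hφ, ?_, ?_, ?_⟩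
  · filter_upwards [hφ0] with x hx
    simp [hx]
  · rw [dd_sub]; exact hUL.sub hφL
  · intro ψ hψ hψ0 hψL
    have h := horth (hψL.toLp _) (mem_MM.2 ⟨ψ, hψ, hψ0, hψL.coeFn_toLp⟩)
    rw [L2.inner_def] at h
    rw [← h]
    refine integral_congr_ae ?_
    filter_upwards [hψL.coeFn_toLp, hUL.coeFn_toLp, hφp, Lp.coeFn_sub (hUL.toLp _) p]
      with q h1 h2 h3 h4
    rw [h1, h4, Pi.sub_apply, h2, h3, dd_sub]
    simp [mul_comm]

lemma pyth {α : Type*} [MeasurableSpace α] {ν : Measure α} {f g : α → ℝ} (hf : MemLp f 2 ν)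
    (hg : MemLp g 2 ν) (h : ∫ q, f q * g q ∂ν = 0) :
    ∫⁻ q, ENNReal.ofReal ((f + g) q ^ 2) ∂ν =
      ∫⁻ q, ENNReal.ofReal (f q ^ 2) ∂ν + ∫⁻ q, ENNReal.ofReal (g q ^ 2) ∂ν := by
  have hfi := hf.integrable_sq
  have hgi := hg.integrable_sq
  have hfgi := (hf.add hg).integrable_sq
  have hm : Integrable (fun q => f q * g q) ν := hf.integrable_mul hg
  rw [← ofReal_integral_eq_lintegral_ofReal hfi (Eventually.of_forall fun q => sq_nonneg _),
    ← ofReal_integral_eq_lintegral_ofReal hgi (Eventually.of_forall fun q => sq_nonneg _),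
    ← ofReal_integral_eq_lintegral_ofReal hfgi (Eventually.of_forall fun q => sq_nonneg _),
    ← ENNReal.ofReal_add (integral_nonneg fun q => sq_nonneg _)
      (integral_nonneg fun q => sq_nonneg _)]
  congr 1
  calc ∫ q, (f + g) q ^ 2 ∂ν = ∫ q, ((f q ^ 2 + g q ^ 2) + 2 * (f q * g q)) ∂ν := by
        refine integral_congr_ae (Eventually.of_forall fun q => ?_)
        simp only [Pi.add_apply]; ring
    _ = _ := by
        rw [integral_add (f := fun q => f q ^ 2 + g q ^ 2) (hfi.add hgi) (hm.const_mul 2),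
          integral_add hfi hgi,
          integral_const_mul, h]
        ring

lemma memLp_dd_indicator {N : ℕ} {s : ℝ} (hs : 0 < s) {Ω B : Set (Euc N)} (hbd : IsBounded Ω)
    (hB : MeasurableSet B) (hBb : IsBounded B) {δ : ℝ} (hδ : 0 < δ)
    (hsep : ∀ x ∈ B, ∀ y ∈ closure Ω, δ ≤ ‖x - y‖) :
    MemLp (dd N s (B.indicator 1)) 2 (volume.restrict (reg N Ω)) := by
  have hm : Measurable (B.indicator (1 : Euc N → ℝ)) := measurable_one.indicator hB
  rw [memLp_two_iff _ (measurable_dd hm), ← lintegral_dd]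
  have hK : MeasurableSet (closure Ω) := isClosed_closure.measurableSet
  have hS : MeasurableSet (B ×ˢ closure Ω ∪ closure Ω ×ˢ B) := (hB.prod hK).union (hK.prod hB)
  have hker : ∀ x ∈ B, ∀ y ∈ closure Ω, 1 / kern N s x y ≤ 1 / δ ^ ((N : ℝ) + 2 * s) := by
    intro x hx y hy
    have : δ ^ ((N : ℝ) + 2 * s) ≤ kern N s x y :=
      Real.rpow_le_rpow hδ.le (hsep x hx y hy) (by positivity)
    exact one_div_le_one_div_of_le (by positivity) this
  have hdis : ∀ x ∈ B, x ∉ closure Ω := by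
    intro x hx hx'
    have := hsep x hx x hx'
    simp at this
    linarith
  have hBf : volume B ≠ ⊤ := hBb.measure_lt_top.ne
  have hKf : volume (closure Ω) ≠ ⊤ := hbd.closure.measure_lt_top.ne
  calc _ ≤ ∫⁻ q in reg N Ω, (B ×ˢ closure Ω ∪ closure Ω ×ˢ B).indicator
        (fun _ => ENNReal.ofReal (1 / δ ^ ((N : ℝ) + 2 * s))) q := by
        refine setLIntegral_mono' (measurableSet_reg N Ω) ?_
        rintro ⟨x, y⟩ hq
        simp only [reg, mem_ofPred_eq] at hq
        by_cases hx : x ∈ B <;> by_cases hy : y ∈ B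
        · exact absurd hq (by simp [hdis x hx, hdis y hy])
        · have hyK : y ∈ closure Ω := hq.resolve_left (hdis x hx)
          rw [indicator_of_mem (show (x, y) ∈ B ×ˢ closure Ω ∪ closure Ω ×ˢ B from Or.inl ⟨hx, hyK⟩)]
          apply ENNReal.ofReal_le_ofReal
          simpa [hx, hy] using hker x hx y hyK
        · have hxK : x ∈ closure Ω := hq.resolve_right (hdis y hy)
          rw [indicator_of_mem (show (x, y) ∈ B ×ˢ closure Ω ∪ closure Ω ×ˢ B from Or.inr ⟨hxK, hy⟩)]
          apply ENNReal.ofReal_le_ofReal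
          have := hker y hy x hxK
          rw [kern_symm] at this
          simpa [hx, hy] using this
        · simp [hx, hy]
    _ ≤ ∫⁻ q, (B ×ˢ closure Ω ∪ closure Ω ×ˢ B).indicator
        (fun _ => ENNReal.ofReal (1 / δ ^ ((N : ℝ) + 2 * s))) q := setLIntegral_le_lintegral _ _
    _ < ⊤ := by
        rw [lintegral_indicator_const hS]
        refine ENNReal.mul_lt_top ENNReal.ofReal_lt_top ?_
        refine (measure_union_le _ _).trans_lt ?_
        rw [Measure.volume_eq_prod, Measure.prod_prod, Measure.prod_prod]
        exact ENNReal.add_lt_top.2 ⟨ENNReal.mul_lt_top hBf.lt_top hKf.lt_top,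
          ENNReal.mul_lt_top hKf.lt_top hBf.lt_top⟩

/-- Testing with indicators. -/
lemma test_indicator {N : ℕ} {s : ℝ} (hs : 0 < s) {Ω B : Set (Euc N)} (hbd : IsBounded Ω)
    (hB : MeasurableSet B) (hBb : IsBounded B) {δ : ℝ} (hδ : 0 < δ)
    (hsep : ∀ x ∈ B, ∀ y ∈ closure Ω, δ ≤ ‖x - y‖) {V : Euc N → ℝ}
    (hVL : MemLp (dd N s V) 2 (volume.restrict (reg N Ω)))
    (horth : ∀ ψ : Euc N → ℝ, Measurable ψ → ψ =ᵐ[volume.restrict Ω] 0 →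
      MemLp (dd N s ψ) 2 (volume.restrict (reg N Ω)) →
        ∫ q, dd N s V q * dd N s ψ q ∂(volume.restrict (reg N Ω)) = 0) :
    IntegrableOn (fun q : Euc N × Euc N => (V q.1 - V q.2) / kern N s q.1 q.2) (B ×ˢ closure Ω) ∧
    ∫ q in B ×ˢ closure Ω, (V q.1 - V q.2) / kern N s q.1 q.2 = 0 := by
  have hL := memLp_dd_indicator hs hbd hB hBb hδ hsep
  have hm : Measurable (B.indicator (1 : Euc N → ℝ)) := measurable_one.indicator hB
  have hK : MeasurableSet (closure Ω) := isClosed_closure.measurableSet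
  have hdis : ∀ x ∈ B, x ∉ closure Ω := by
    intro x hx hx'
    have := hsep x hx x hx'
    simp at this
    linarith
  have hz : B.indicator (1 : Euc N → ℝ) =ᵐ[volume.restrict Ω] 0 := by
    have : ∀ᵐ x ∂(volume.restrict (closure Ω)), B.indicator (1 : Euc N → ℝ) x = 0 := by
      filter_upwards [ae_restrict_mem hK] with x hx
      exact indicator_of_notMem (fun h => hdis x h hx) _
    exact ae_restrict_of_ae_restrict_of_subset subset_closure this
  have h0 := horth _ hm hz hL
  have hint : IntegrableOn (fun q => dd N s V q * dd N s (B.indicator 1) q) (reg N Ω) :=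
    hVL.integrable_mul hL
  have hBK : B ×ˢ closure Ω ⊆ reg N Ω := fun q hq => Or.inr hq.2
  have hKB : closure Ω ×ˢ B ⊆ reg N Ω := fun q hq => Or.inl hq.1
  have hEq : EqOn (fun q => dd N s V q * dd N s (B.indicator 1) q)
      (fun q : Euc N × Euc N => (V q.1 - V q.2) / kern N s q.1 q.2) (B ×ˢ closure Ω) := by
    rintro ⟨x, y⟩ ⟨hx, hy⟩
    simp only at hx hy
    have hy' : y ∉ B := fun h => hdis y h hy
    simp only [dd_mul]
    simp [hx, hy']
  have hEq2 : EqOn (fun q => dd N s V q * dd N s (B.indicator 1) q)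
      (fun q : Euc N × Euc N => (V q.2 - V q.1) / kern N s q.2 q.1) (closure Ω ×ˢ B) := by
    rintro ⟨x, y⟩ ⟨hx, hy⟩
    simp only at hx hy
    have hx' : x ∉ B := fun h => hdis x h hx
    simp only [dd_mul]
    rw [kern_symm N s y x]
    simp [hy, hx']
  refine ⟨(hint.mono_set hBK).congr_fun hEq (hB.prod hK), ?_⟩
  have h1 : ∫ q in B ×ˢ closure Ω ∪ closure Ω ×ˢ B, dd N s V q * dd N s (B.indicator 1) q = 0 := by
    rw [← h0]
    symm
    refine setIntegral_eq_of_subset_of_forall_sdiff_eq_zero (measurableSet_reg N Ω)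
      (union_subset hBK hKB) ?_
    rintro ⟨x, y⟩ ⟨hq, hq'⟩
    simp only [reg, mem_ofPred_eq] at hq
    have hx : x ∉ B := fun h => hq' (Or.inl ⟨h, hq.resolve_left (hdis x h)⟩)
    have hy : y ∉ B := fun h => hq' (Or.inr ⟨hq.resolve_right (hdis y h), h⟩)
    simp [dd, hx, hy]
  rw [setIntegral_union ?_ (hK.prod hB) (hint.mono_set hBK) (hint.mono_set hKB),
    setIntegral_congr_fun (hB.prod hK) hEq, setIntegral_congr_fun (hK.prod hB) hEq2] at h1
  · have h2 : ∫ q in closure Ω ×ˢ B, (V q.2 - V q.1) / kern N s q.2 q.1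
        = ∫ q in B ×ˢ closure Ω, (V q.1 - V q.2) / kern N s q.1 q.2 := by
      rw [Measure.volume_eq_prod]
      exact setIntegral_prod_swap (μ := (volume : Measure (Euc N)))
        (ν := (volume : Measure (Euc N))) B (closure Ω)
        (fun q => (V q.1 - V q.2) / kern N s q.1 q.2)
    rw [h2] at h1
    linarith
  · rw [Set.disjoint_left]
    rintro ⟨x, y⟩ ⟨hx, -⟩ ⟨hx', -⟩
    exact hdis x hx hx'

lemma neumann_on {N : ℕ} {s : ℝ} (hs : 0 < s) {Ω B : Set (Euc N)} (hbd : IsBounded Ω)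
    (hfr : volume (frontier Ω) = 0)
    (hopen : IsOpen Ω)
    (hB : MeasurableSet B) (hBb : IsBounded B) {δ : ℝ} (hδ : 0 < δ)
    (hsep : ∀ x ∈ B, ∀ y ∈ closure Ω, δ ≤ ‖x - y‖) {V : Euc N → ℝ}
    (hVL : MemLp (dd N s V) 2 (volume.restrict (reg N Ω)))
    (horth : ∀ ψ : Euc N → ℝ, Measurable ψ → ψ =ᵐ[volume.restrict Ω] 0 →
      MemLp (dd N s ψ) 2 (volume.restrict (reg N Ω)) →
        ∫ q, dd N s V q * dd N s ψ q ∂(volume.restrict (reg N Ω)) = 0) :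
    ∀ᵐ x ∂(volume.restrict B), Nneu N s Ω V x = 0 := by
  have hK : (volume : Measure (Euc N)).restrict (closure Ω) = volume.restrict Ω := by
    refine Measure.restrict_congr_set ?_
    have h1 : volume (closure Ω \ Ω) = 0 := by rw [← hopen.frontier_eq]; exact hfr
    exact (ae_eq_set.2 ⟨h1, by rw [sdiff_eq_empty.2 subset_closure, measure_empty]⟩)
  have key : ∀ T : Set (Euc N), MeasurableSet T → T ⊆ B →
      Integrable (fun q : Euc N × Euc N => (V q.1 - V q.2) / kern N s q.1 q.2)
        ((volume.restrict T).prod (volume.restrict Ω)) ∧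
      ∫ x in T, ∫ y in Ω, (V x - V y) / kern N s x y = 0 := by
    intro T hT hTB
    have h := test_indicator hs hbd hT (hBb.subset hTB) hδ
      (fun x hx => hsep x (hTB hx)) hVL horth
    unfold IntegrableOn at h
    rw [Measure.volume_eq_prod, ← Measure.prod_restrict, hK] at h
    refine ⟨h.1, ?_⟩
    rw [← h.2, integral_prod _ h.1]
  have hint := (key B hB subset_rfl).1.integral_prod_left
  have hz := Integrable.ae_eq_zero_of_forall_setIntegral_eq_zero hint (by
    intro T hT _
    rw [Measure.restrict_restrict hT]
    exact (key (T ∩ B) (hT.inter hB) inter_subset_right).2)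
  filter_upwards [hz] with x hx
  unfold Nneu
  simp only [Pi.zero_apply] at hx
  rw [hx, mul_zero]

lemma neumann_ae {N : ℕ} {s : ℝ} (hs : 0 < s) {Ω : Set (Euc N)} (hbd : IsBounded Ω)
    (hfr : volume (frontier Ω) = 0) (hopen : IsOpen Ω) (hne : Ω.Nonempty) {V : Euc N → ℝ}
    (hVL : MemLp (dd N s V) 2 (volume.restrict (reg N Ω)))
    (horth : ∀ ψ : Euc N → ℝ, Measurable ψ → ψ =ᵐ[volume.restrict Ω] 0 →
      MemLp (dd N s ψ) 2 (volume.restrict (reg N Ω)) →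
        ∫ q, dd N s V q * dd N s ψ q ∂(volume.restrict (reg N Ω)) = 0) :
    ∀ᵐ x ∂(volume.restrict (closure Ω)ᶜ), Nneu N s Ω V x = 0 := by
  have hcov : (closure Ω)ᶜ ⊆ ⋃ n : ℕ,
      ({x : Euc N | 1 / ((n : ℝ) + 1) < Metric.infDist x (closure Ω)} ∩ Metric.ball 0 n) := by
    intro x hx
    have h1 : 0 < Metric.infDist x (closure Ω) :=
      (isClosed_closure.notMem_iff_infDist_pos hne.closure).1 hx
    obtain ⟨n, hn⟩ := exists_nat_one_div_lt h1
    obtain ⟨m, hm⟩ := exists_nat_gt ‖x‖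
    refine mem_iUnion.2 ⟨max n m, ?_, ?_⟩
    · simp only [mem_ofPred_eq]
      refine lt_of_le_of_lt ?_ hn
      refine one_div_le_one_div_of_le (by positivity) ?_
      have : (n : ℝ) ≤ (max n m : ℕ) := by exact_mod_cast le_max_left n m
      linarith
    · rw [mem_ball_zero_iff]
      have : (m : ℝ) ≤ (max n m : ℕ) := by exact_mod_cast le_max_right n m
      linarith
  refine ae_restrict_of_ae_restrict_of_subset hcov ?_
  rw [ae_restrict_iUnion_iff]
  intro n
  refine neumann_on hs hbd hfr hopen ?_ ?_ (δ := 1 / ((n : ℝ) + 1)) (by positivity) ?_ hVL horth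
  · exact (measurableSet_lt measurable_const (Metric.continuous_infDist_pt _).measurable).inter
      Metric.isOpen_ball.measurableSet
  · exact Metric.isBounded_ball.subset inter_subset_right
  · rintro x ⟨hx, -⟩ y hy
    rw [← dist_eq_norm]
    exact (le_of_lt hx).trans (Metric.infDist_le_dist_of_mem hy)

lemma final {N : ℕ} (hN : 2 ≤ N) {s : ℝ} (hs : s ∈ Set.Ioo (0 : ℝ) 1)
    {Ω : Set (Euc N)} (hopen : IsOpen Ω) (hbd : IsBounded Ω) (hne : Ω.Nonempty)
    (hext : ∀ u : Euc N → ℝ, memHsOn N s Ω u →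
      ∃ U : Euc N → ℝ, memHs N s Ω U ∧ U =ᵐ[volume.restrict Ω] u)
    (u : Euc N → ℝ) (hu : memHsOn N s Ω u) :
      ∃ ue : Euc N → ℝ, memHs N s Ω ue ∧ ue =ᵐ[volume.restrict Ω] u ∧
        (∀ v : Euc N → ℝ, memHs N s Ω v → v =ᵐ[volume.restrict Ω] u →
          semiSq N s Ω ue ≤ semiSq N s Ω v) ∧
        (∀ᵐ x ∂(volume.restrict (closure Ω)ᶜ), Nneu N s Ω ue x = 0) ∧
        (∀ w : Euc N → ℝ, memHs N s Ω w → w =ᵐ[volume.restrict Ω] u →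
          (∀ v : Euc N → ℝ, memHs N s Ω v → v =ᵐ[volume.restrict Ω] u →
            semiSq N s Ω w ≤ semiSq N s Ω v) →
          w =ᵐ[(volume : Measure (Euc N))] ue) := by
  have hfr := frontier_null hN hs hopen hne hext
  have hA := adm_reg hN hopen hne
  have hLp : ∀ v, memHs N s Ω v → MemLp (dd N s v) 2 (volume.restrict (reg N Ω)) := by
    intro v hv
    refine (memLp_two_iff _ (measurable_dd hv.1)).2 ?_
    rw [← semiSq_eq]; exact hv.2.2
  obtain ⟨U, hU, hUu⟩ := hext u hu
  obtain ⟨V, hV, hVU, hVL, horth⟩ := exists_proj hA hU.1 (hLp U hU)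
  have hVu : V =ᵐ[volume.restrict Ω] u := hVU.trans hUu
  have hVm : memHs N s Ω V := by
    refine ⟨hV, ?_, ?_⟩
    · have : l2sq N Ω V = l2sq N Ω u := by
        unfold l2sq
        exact lintegral_congr_ae (hVu.mono fun x hx => by simp only [hx])
      rw [this]; exact hu.2.1
    · rw [semiSq_eq]; exact (memLp_two_iff _ (measurable_dd hV)).1 hVL
  have hpy : ∀ w, memHs N s Ω w → w =ᵐ[volume.restrict Ω] u →
      semiSq N s Ω w = semiSq N s Ω V + semiSq N s Ω (w - V) := by
    intro w hw hwu
    have hψL : MemLp (dd N s (w - V)) 2 (volume.restrict (reg N Ω)) := by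
      rw [dd_sub]; exact (hLp w hw).sub hVL
    have h0 := horth (w - V) (hw.1.sub hV) (by
      filter_upwards [hwu, hVu] with x h1 h2
      simp [h1, h2]) hψL
    have := pyth hVL hψL h0
    rw [← dd_add, add_sub_cancel] at this
    rw [semiSq_eq, semiSq_eq, semiSq_eq]
    exact this
  refine ⟨V, hVm, hVu, ?_, neumann_ae hs.1 hbd hfr hopen hne hVL horth, ?_⟩
  · intro v hv hvu
    rw [hpy v hv hvu]
    exact le_self_add
  · intro w hw hwu hmin
    have h1 := hmin V hVm hVu
    rw [hpy w hw hwu] at h1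
    have h2 : semiSq N s Ω (w - V) = 0 := by
      have h3 : semiSq N s Ω V + semiSq N s Ω (w - V) ≤ semiSq N s Ω V + 0 := by
        rw [add_zero]; exact h1
      exact le_antisymm ((ENNReal.add_le_add_iff_left hVm.2.2.ne).1 h3) zero_le
    rw [semiSq_eq, lintegral_eq_zero_iff
      ((measurable_dd (hw.1.sub hV)).pow_const 2).ennreal_ofReal] at h2
    have h4 := hA.fub _ h2
    have h5 : ∀ᵐ y ∂(volume.restrict Ω), w y = V y := hwu.trans hVu.symm
    have : (ae (volume.restrict Ω)).NeBot := ae_neBot.2 hA.ne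
    obtain ⟨y, hy1, hy2⟩ := (h4.and h5).exists
    filter_upwards [hy1, hA.atom y] with x hx hxy
    have hk := Real.sqrt_pos.2 (kern_pos (s := s) hxy)
    simp only [Pi.zero_apply, ENNReal.ofReal_eq_zero] at hx
    have h6 : dd N s (w - V) (x, y) = 0 := by
      have := le_antisymm hx (sq_nonneg _)
      exact pow_eq_zero_iff (two_ne_zero) |>.1 this
    simp only [dd, Pi.sub_apply, hy2, sub_self, sub_zero, div_eq_zero_iff] at h6
    rcases h6 with h6 | h6
    · linarith
    · exact absurd h6 hk.ne'


/-- Proposition 2.2: existence, minimality, uniqueness of the `s`-minimal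
extension, and vanishing of its nonlocal Neumann derivative. The Lipschitz regularity of the
bounded domain `Ω` enters only through the extension property `hext`. -/
theorem statement2 (N : ℕ) (hN : 2 ≤ N) (s : ℝ) (hs : s ∈ Set.Ioo (0 : ℝ) 1)
    (Ω : Set (Euc N)) (hopen : IsOpen Ω) (hbd : IsBounded Ω) (hconn : IsConnected Ω)
    (hext : ∀ u : Euc N → ℝ, memHsOn N s Ω u →
      ∃ U : Euc N → ℝ, memHs N s Ω U ∧ U =ᵐ[volume.restrict Ω] u) :
    ∀ u : Euc N → ℝ, memHsOn N s Ω u →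
      ∃ ue : Euc N → ℝ, memHs N s Ω ue ∧ ue =ᵐ[volume.restrict Ω] u ∧
        (∀ v : Euc N → ℝ, memHs N s Ω v → v =ᵐ[volume.restrict Ω] u →
          semiSq N s Ω ue ≤ semiSq N s Ω v) ∧
        (∀ᵐ x ∂(volume.restrict (closure Ω)ᶜ), Nneu N s Ω ue x = 0) ∧
        (∀ w : Euc N → ℝ, memHs N s Ω w → w =ᵐ[volume.restrict Ω] u →
          (∀ v : Euc N → ℝ, memHs N s Ω v → v =ᵐ[volume.restrict Ω] u →
            semiSq N s Ω w ≤ semiSq N s Ω v) →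
          w =ᵐ[(volume : Measure (Euc N))] ue) := by
  exact fun u hu => final hN hs hopen hbd hconn.nonempty hext u hu

end FracNeumann
end
end

section
/- Let N ≥ 2, s ∈ (0,1), and let Ω ⊂ ℝ^N be a bounded Lipschitz domain. Then H̃^s_{Ω,0} := {u ∈ H^s_{Ω,0} : (𝒩_s u)(x) = 0 for a.e. x ∈ Ω^c} is a linear subspace of H^s_{Ω,0} (with functions identified a.e.) which is closed with respect to the norm u ↦ ‖u‖_{L²(Ω)} + [u]_{H^s_{Ω,0}}: if u_k ∈ H̃^s_{Ω,0} and ‖u_k − u‖_{L²(Ω)} + [u_k − u]_{H^s_{Ω,0}} → 0 for some u ∈ H^s_{Ω,0}, then u ∈ H̃^s_{Ω,0}. -/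
open MeasureTheory Filter Topology Bornology Set
open scoped ENNReal NNReal

noncomputable section

namespace FracNeumann

lemma measurable_kern_right (N : ℕ) (s : ℝ) (x : Euc N) :
    Measurable (fun y : Euc N => kern N s x y) := by
  unfold kern
  fun_prop

/-- Convexity bound for the square of a linear combination, in extended reals. -/
lemma ofReal_comb_le (a b f g k : ℝ) (hk : 0 ≤ k) :
    ENNReal.ofReal ((a * f + b * g) ^ 2 / k) ≤
      ENNReal.ofReal (2 * a ^ 2) * ENNReal.ofReal (f ^ 2 / k) +
        ENNReal.ofReal (2 * b ^ 2) * ENNReal.ofReal (g ^ 2 / k) := by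
  rw [← ENNReal.ofReal_mul (by positivity), ← ENNReal.ofReal_mul (by positivity),
    ← ENNReal.ofReal_add (by positivity) (by positivity)]
  apply ENNReal.ofReal_le_ofReal
  have : 2 * a ^ 2 * (f ^ 2 / k) + 2 * b ^ 2 * (g ^ 2 / k)
      = (2 * a ^ 2 * f ^ 2 + 2 * b ^ 2 * g ^ 2) / k := by ring
  rw [this]
  apply div_le_div_of_nonneg_right _ hk
  nlinarith [sq_nonneg (a * f - b * g)]

lemma lintegral_comb_lt_top {α : Type*} [MeasurableSpace α] (μ : Measure α)
    (a b : ℝ) (f g k : α → ℝ) (hf : Measurable f) (hk : Measurable k)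
    (hk0 : ∀ x, 0 ≤ k x)
    (h1 : ∫⁻ x, ENNReal.ofReal (f x ^ 2 / k x) ∂μ < ⊤)
    (h2 : ∫⁻ x, ENNReal.ofReal (g x ^ 2 / k x) ∂μ < ⊤) :
    ∫⁻ x, ENNReal.ofReal ((a * f x + b * g x) ^ 2 / k x) ∂μ < ⊤ := by
  refine lt_of_le_of_lt (lintegral_mono fun x => ofReal_comb_le a b (f x) (g x) (k x) (hk0 x)) ?_
  rw [lintegral_add_left (by fun_prop), lintegral_const_mul' _ _ ENNReal.ofReal_ne_top,
    lintegral_const_mul' _ _ ENNReal.ofReal_ne_top]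
  exact ENNReal.add_lt_top.2 ⟨ENNReal.mul_lt_top ENNReal.ofReal_lt_top h1,
    ENNReal.mul_lt_top ENNReal.ofReal_lt_top h2⟩

lemma memHs_comb (N : ℕ) (s : ℝ) (Ω : Set (Euc N)) (u v : Euc N → ℝ) (a b : ℝ)
    (hu : memHs N s Ω u) (hv : memHs N s Ω v) :
    memHs N s Ω (fun x => a * u x + b * v x) := by
  obtain ⟨hum, hu1, hu2⟩ := hu
  obtain ⟨hvm, hv1, hv2⟩ := hv
  refine ⟨by fun_prop, ?_, ?_⟩
  · have := lintegral_comb_lt_top (volume.restrict Ω) a b u v (fun _ => 1) hum measurable_const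
      (fun _ => zero_le_one) (by simpa [l2sq] using hu1) (by simpa [l2sq] using hv1)
    simpa [l2sq] using this
  · have := lintegral_comb_lt_top (volume.restrict (reg N Ω)) a b
      (fun q : Euc N × Euc N => u q.1 - u q.2) (fun q => v q.1 - v q.2)
      (fun q => kern N s q.1 q.2) (by fun_prop) (measurable_kern N s)
      (fun q => kern_nonneg _ _ _ _) hu2 hv2
    unfold semiSq
    convert this using 5
    ring

lemma exists_kern_bound (N : ℕ) (s : ℝ) (hs : 0 < s) (Ω : Set (Euc N)) (x : Euc N)
    (hx : x ∉ closure Ω) : ∃ C : ℝ, ∀ y ∈ Ω, (kern N s x y)⁻¹ ≤ C := by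
  have hx' : x ∈ (closure Ω)ᶜ := hx
  obtain ⟨d, hd, hball⟩ := Metric.isOpen_iff.1 isClosed_closure.isOpen_compl x hx'
  refine ⟨(d ^ ((N : ℝ) + 2 * s))⁻¹, fun y hy => ?_⟩
  have hdy : d ≤ ‖x - y‖ := by
    by_contra! h
    exact hball (show y ∈ Metric.ball x d by
      rwa [Metric.mem_ball, dist_comm, dist_eq_norm]) (subset_closure hy)
  unfold kern
  gcongr

lemma ae_kern_bound (N : ℕ) (s : ℝ) (hs : 0 < s) (Ω : Set (Euc N)) (hΩ : IsOpen Ω) (x : Euc N)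
    (hx : x ∉ closure Ω) : ∃ C : ℝ, ∀ᵐ y ∂(volume.restrict Ω), ‖(kern N s x y)⁻¹‖ ≤ C := by
  obtain ⟨C, hC⟩ := exists_kern_bound N s hs Ω x hx
  refine ⟨C, (ae_restrict_iff' hΩ.measurableSet).2 (ae_of_all _ fun y hy => ?_)⟩
  rw [Real.norm_of_nonneg (inv_nonneg.2 (kern_nonneg _ _ _ _))]
  exact hC y hy

lemma integrable_diff (N : ℕ) (s : ℝ) (hs : 0 < s) (Ω : Set (Euc N)) (hΩ : IsOpen Ω)
    (hb : IsBounded Ω) (u : Euc N → ℝ) (hu : Measurable u) (hu2 : l2sq N Ω u < ⊤)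
    (x : Euc N) (hx : x ∉ closure Ω) :
    Integrable (fun y => (u x - u y) / kern N s x y) (volume.restrict Ω) := by
  haveI : IsFiniteMeasure (volume.restrict Ω) := ⟨by
    rw [Measure.restrict_apply_univ]; exact hb.measure_lt_top⟩
  have hui : Integrable u (volume.restrict Ω) := by
    have h2 : MemLp u 2 (volume.restrict Ω) := by
      rw [memLp_two_iff_integrable_sq hu.aestronglyMeasurable]
      refine ⟨by fun_prop, ?_⟩
      rw [hasFiniteIntegral_iff_ofReal (ae_of_all _ fun y => sq_nonneg _)]
      exact hu2
    exact h2.integrable (by norm_num)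
  obtain ⟨C, hC⟩ := ae_kern_bound N s hs Ω hΩ x hx
  have h := ((integrable_const (u x)).sub hui).mul_bdd (c := C)
    (measurable_kern_right N s x).inv.aestronglyMeasurable hC
  simpa [div_eq_mul_inv] using h

lemma kernInt_lt_top (N : ℕ) (s : ℝ) (hs : 0 < s) (Ω : Set (Euc N)) (hΩ : IsOpen Ω)
    (hb : IsBounded Ω) (x : Euc N) (hx : x ∉ closure Ω) :
    ∫⁻ y in Ω, ENNReal.ofReal (1 / kern N s x y) < ⊤ := by
  obtain ⟨C, hC⟩ := exists_kern_bound N s hs Ω x hx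
  refine lt_of_le_of_lt (setLIntegral_mono measurable_const
    (g := fun _ => ENNReal.ofReal C) fun y hy => ?_) ?_
  · rw [one_div]; exact ENNReal.ofReal_le_ofReal (hC y hy)
  · rw [setLIntegral_const]
    exact ENNReal.mul_lt_top ENNReal.ofReal_lt_top hb.measure_lt_top

/-- Cauchy-Schwarz for the nonlocal Neumann derivative. -/
lemma cauchy_schwarz (N : ℕ) (s : ℝ) (Ω : Set (Euc N)) (w : Euc N → ℝ) (hw : Measurable w)
    (x : Euc N) :
    ‖∫ y in Ω, (w x - w y) / kern N s x y‖ₑ ^ 2 ≤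
      (∫⁻ y in Ω, ENNReal.ofReal ((w x - w y) ^ 2 / kern N s x y)) *
        ∫⁻ y in Ω, ENNReal.ofReal (1 / kern N s x y) := by
  have hk := measurable_kern_right N s x
  have h1 : ‖∫ y in Ω, (w x - w y) / kern N s x y‖ₑ ≤
      ∫⁻ y in Ω, ((fun y => ENNReal.ofReal (|w x - w y| / √(kern N s x y))) *
        (fun y => ENNReal.ofReal (1 / √(kern N s x y)))) y := by
    refine (enorm_integral_le_lintegral_enorm _).trans (lintegral_mono fun y => le_of_eq ?_)
    rw [Pi.mul_apply, ← ENNReal.ofReal_mul (by positivity), Real.enorm_eq_ofReal_abs, abs_div,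
      abs_of_nonneg (kern_nonneg N s x y), div_mul_div_comm, mul_one,
      Real.mul_self_sqrt (kern_nonneg N s x y)]
  have h2 := ENNReal.lintegral_mul_le_Lp_mul_Lq (volume.restrict Ω) Real.HolderConjugate.two_two
    (f := fun y => ENNReal.ofReal (|w x - w y| / √(kern N s x y)))
    (g := fun y => ENNReal.ofReal (1 / √(kern N s x y))) (by fun_prop) (by fun_prop)
  have h3 := pow_le_pow_left₀ zero_le (h1.trans h2) 2
  refine h3.trans (le_of_eq ?_)
  rw [mul_pow]
  simp only [← ENNReal.rpow_natCast, ← ENNReal.rpow_mul]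
  norm_num
  congr 1 <;> refine lintegral_congr fun y => ?_
  · rw [← ENNReal.ofReal_pow (by positivity), div_pow, sq_abs, Real.sq_sqrt (kern_nonneg N s x y)]
  · rw [← ENNReal.ofReal_pow (by positivity), inv_pow, Real.sq_sqrt (kern_nonneg N s x y)]

lemma lintegral_inner_le (N : ℕ) (s : ℝ) (Ω : Set (Euc N)) (w : Euc N → ℝ) (hw : Measurable w) :
    ∫⁻ x in (closure Ω)ᶜ, ∫⁻ y in Ω, ENNReal.ofReal ((w x - w y) ^ 2 / kern N s x y)
      ≤ semiSq N s Ω w := by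
  have hk := measurable_kern N s
  have hm : Measurable (fun q : Euc N × Euc N =>
      ENNReal.ofReal ((w q.1 - w q.2) ^ 2 / kern N s q.1 q.2)) := by fun_prop
  rw [← lintegral_prod (fun q : Euc N × Euc N =>
      ENNReal.ofReal ((w q.1 - w q.2) ^ 2 / kern N s q.1 q.2)) hm.aemeasurable,
    Measure.prod_restrict]
  exact lintegral_mono_set fun q hq => Or.inr (subset_closure hq.2)


/-- Proposition 2.4: `H̃^s_{Ω,0}` is a linear subspace of `H^s_{Ω,0}` which is
closed with respect to the norm `u ↦ ‖u‖_{L²(Ω)} + [u]_{H^s_{Ω,0}}`. -/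
theorem statement3 (N : ℕ) (hN : 2 ≤ N) (s : ℝ) (hs : s ∈ Set.Ioo (0 : ℝ) 1)
    (Ω : Set (Euc N)) (hΩ : IsLipschitzDomain N Ω) :
    (∀ (u v : Euc N → ℝ) (a b : ℝ), memHsTilde N s Ω u → memHsTilde N s Ω v →
      memHsTilde N s Ω (fun x => a * u x + b * v x)) ∧
    (∀ (uk : ℕ → Euc N → ℝ) (u : Euc N → ℝ),
      (∀ k, memHsTilde N s Ω (uk k)) → memHs N s Ω u →
      Filter.Tendsto (fun k =>
          Real.sqrt ((l2sq N Ω (fun x => uk k x - u x)).toReal) +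
          Real.sqrt ((semiSq N s Ω (fun x => uk k x - u x)).toReal))
        Filter.atTop (nhds 0) →
      memHsTilde N s Ω u) := by

  obtain ⟨hop, hb, -, -⟩ := hΩ
  have hs0 := hs.1
  have hlin : ∀ (u v : Euc N → ℝ) (a b : ℝ), memHs N s Ω u → memHs N s Ω v →
      ∀ x, x ∉ closure Ω →
      ∫ y in Ω, ((a * u x + b * v x) - (a * u y + b * v y)) / kern N s x y =
        a * (∫ y in Ω, (u x - u y) / kern N s x y) +
          b * ∫ y in Ω, (v x - v y) / kern N s x y := by
    intro u v a b hu hv x hx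
    have iu := integrable_diff N s hs0 Ω hop hb u hu.1 hu.2.1 x hx
    have iv := integrable_diff N s hs0 Ω hop hb v hv.1 hv.2.1 x hx
    rw [← integral_const_mul, ← integral_const_mul,
      ← integral_add (iu.const_mul a) (iv.const_mul b)]
    refine integral_congr_ae (ae_of_all _ fun y => ?_)
    ring
  have hmc : MeasurableSet (closure Ω)ᶜ := isClosed_closure.measurableSet.compl
  refine ⟨?_, ?_⟩
  · intro u v a b hu hv
    refine ⟨memHs_comb N s Ω u v a b hu.1 hv.1, ?_⟩
    filter_upwards [hu.2, hv.2, ae_restrict_mem hmc] with x h1 h2 hx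
    unfold Nneu at h1 h2 ⊢
    rw [hlin u v a b hu.1 hv.1 x hx]
    linear_combination a * h1 + b * h2
  · intro uk u huk hu hlim
    refine ⟨hu, ?_⟩
    by_cases hc : cNs N s = 0
    · exact ae_of_all _ fun x => by simp [Nneu, hc]
    set I : Euc N → ℝ := fun x => ∫ y in Ω, (u x - u y) / kern N s x y with hI
    set K : Euc N → ℝ≥0∞ := fun x => ∫⁻ y in Ω, ENNReal.ofReal (1 / kern N s x y) with hK
    have hw : ∀ k, memHs N s Ω (fun x => uk k x - u x) := by
      intro k
      have := memHs_comb N s Ω (uk k) u 1 (-1) (huk k).1 hu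
      simpa [sub_eq_add_neg] using this
    have hbound : ∀ k, ∫⁻ x in (closure Ω)ᶜ, ‖I x‖ₑ ^ 2 / K x
        ≤ semiSq N s Ω (fun x => uk k x - u x) := by
      intro k
      refine le_trans (lintegral_mono_ae ?_)
        (lintegral_inner_le N s Ω (fun x => uk k x - u x) (hw k).1)
      filter_upwards [(huk k).2, ae_restrict_mem hmc] with x h1 hx
      refine ENNReal.div_le_of_le_mul ?_
      have hcs := cauchy_schwarz N s Ω (fun x => uk k x - u x) (hw k).1 x
      have h2 := hlin (uk k) u 1 (-1) (huk k).1 hu x hx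
      have h3 : (∫ y in Ω, (uk k x - uk k y) / kern N s x y) = 0 :=
        (mul_eq_zero.1 h1).resolve_left hc
      have h4 : ∫ y in Ω, ((uk k x - u x) - (uk k y - u y)) / kern N s x y = - I x := by
        rw [h3] at h2
        simpa [sub_eq_add_neg, hI] using h2
      rw [h4, enorm_neg] at hcs
      exact hcs
    have hsemi : Tendsto (fun k => semiSq N s Ω (fun x => uk k x - u x)) atTop (𝓝 0) := by
      have h1 : Tendsto (fun k => √((semiSq N s Ω (fun x => uk k x - u x)).toReal))
          atTop (𝓝 0) :=
        squeeze_zero (fun k => Real.sqrt_nonneg _)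
          (fun k => le_add_of_nonneg_left (Real.sqrt_nonneg _)) hlim
      have h2 := h1.pow 2
      simp only [Real.sq_sqrt ENNReal.toReal_nonneg] at h2
      have h3 := ENNReal.tendsto_ofReal h2
      simp only [ENNReal.ofReal_toReal (hw _).2.2.ne] at h3
      simpa using h3
    have hzero : ∫⁻ x in (closure Ω)ᶜ, ‖I x‖ₑ ^ 2 / K x = 0 :=
      le_antisymm (ge_of_tendsto' hsemi hbound) zero_le
    have hkm := measurable_kern N s
    have hum := hu.1
    have hIm : Measurable I := by
      have : Measurable (fun q : Euc N × Euc N => (u q.1 - u q.2) / kern N s q.1 q.2) := by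
        fun_prop
      exact (this.stronglyMeasurable.integral_prod_right' (ν := volume.restrict Ω)).measurable
    have hKm : Measurable K := by
      have : Measurable (fun q : Euc N × Euc N => ENNReal.ofReal (1 / kern N s q.1 q.2)) := by
        fun_prop
      exact this.lintegral_prod_right' (ν := volume.restrict Ω)
    rw [lintegral_eq_zero_iff (by fun_prop)] at hzero
    filter_upwards [hzero, ae_restrict_mem hmc] with x h1 hx
    have hKx : K x ≠ ⊤ := (kernInt_lt_top N s hs0 Ω hop hb x hx).ne
    have h2 : I x = 0 := by
      rcases ENNReal.div_eq_zero_iff.1 h1 with h | h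
      · simpa using h
      · exact absurd h hKx
    show cNs N s * I x = 0
    rw [h2, mul_zero]

end FracNeumann
end
end
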